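/- arXiv:2410.10649 — 2 statements merged into one kernel-verified Lean document; each statement's English description precedes it below -/
import Mathlib

section
/- Let α > 0, d ≥ 1, ℓ = ⌊α⌋⁻, m = C(ℓ+d, ℓ), let 0 < β ≤ α, and fix constants c_L ≥ c_d > 0 and c_N > 0. There is a constant C > 0 depending only on α, β, d, c_d, c_L and c_N such that the following holds. Let L ∈ (0, 1/2], let x ∈ ℝ^d, and let A ⊂ ℝ^d be a set of m points satisfying the geometric hypotheses at scale L with constants c_L, c_d, c_N. Then for every f₀ ∈ C^β_1 and every τ > 0, the Matérn kernel matrix K_{τA,τA} is invertible and |f₀(x) − K_{τx,τA} (K_{τA,τA})⁻¹ f₀(A)| ≤ C (τ^α L^α + L^β) Λ, where f₀(A) denotes the vector (f₀(w))_{w∈A}, Λ = 1 if α ∉ ℕ and Λ = ln(1/L) if α ∈ ℕ. -/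
open Matrix MeasureTheory

noncomputable section

/-- The Matérn function with regularity `α` on ℝ^d (Fourier normalization):
`K_α(x) = ∫ cos⟨x,ξ⟩ (1+‖ξ‖₂²)^{-(α+d/2)} dξ`. -/
def matern (α : ℝ) (d : ℕ) (x : Fin d → ℝ) : ℝ :=
  ∫ ξ : Fin d → ℝ, Real.cos (∑ j, x j * ξ j) * (1 + ∑ j, ξ j ^ 2) ^ (-(α + (d : ℝ) / 2))

/-- `⌊α⌋⁻`, the largest integer strictly smaller than `α` (for `α > 0`). -/
def lbelow (α : ℝ) : ℕ := Nat.ceil α - 1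

/-- `α` is a (nonnegative) integer. -/
def IsNatVal (α : ℝ) : Prop := ∃ n : ℕ, α = n

/-- The Euclidean norm `‖x‖₂` on ℝ^d. -/
def nrm {d : ℕ} (x : Fin d → ℝ) : ℝ := Real.sqrt (∑ j, x j ^ 2)

/-- Partial derivative in the `j`-th coordinate. -/
def pder (d : ℕ) (j : Fin d) (f : (Fin d → ℝ) → ℝ) : (Fin d → ℝ) → ℝ :=
  fun x => fderiv ℝ f x (Pi.single j 1)

/-- The iterated partial derivative `∂^k` associated with a multi-index `k ∈ ℕ^d`. -/
def mder (d : ℕ) (k : Fin d → ℕ) (f : (Fin d → ℝ) → ℝ) : (Fin d → ℝ) → ℝ :=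
  (List.finRange d).foldr (fun j g => (pder d j)^[k j] g) f

/-- Mixed derivative `F^{(k₁,k₂)}(x₁,x₂) = ∂^{k₁}_{x₁} ∂^{k₂}_{x₂} F(x₁,x₂)`. -/
def mder2 (d : ℕ) (k₁ k₂ : Fin d → ℕ) (F : (Fin d → ℝ) → (Fin d → ℝ) → ℝ)
    (x₁ x₂ : Fin d → ℝ) : ℝ :=
  mder d k₁ (fun y => mder d k₂ (F y) x₂) x₁

/-- The Matérn kernel matrix `K_{A,A} = (K(w_i, w_j))_{i,j}`. -/
def maternMat (α : ℝ) (d : ℕ) {n : ℕ} (w : Fin n → Fin d → ℝ) :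
    Matrix (Fin n) (Fin n) ℝ :=
  Matrix.of fun i j => matern α d (w i - w j)

/-- The Matérn kernel column vector `K_{A,x} = (K(w_i, x))_i`. -/
def maternVec (α : ℝ) (d : ℕ) {n : ℕ} (w : Fin n → Fin d → ℝ) (x : Fin d → ℝ) :
    Fin n → ℝ :=
  fun i => matern α d (w i - x)

/-- The conditional kernel `K̃(x₁,x₂) = K(x₁,x₂) − K_{x₁,A} K_{A,A}⁻¹ K_{A,x₂}`. -/
def condK (α : ℝ) (d : ℕ) {n : ℕ} (w : Fin n → Fin d → ℝ) (x₁ x₂ : Fin d → ℝ) : ℝ :=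
  matern α d (x₁ - x₂) -
    maternVec α d w x₁ ⬝ᵥ ((maternMat α d w)⁻¹ *ᵥ maternVec α d w x₂)

/-- The unit cube `[0,1]^d`. -/
def unitCube (d : ℕ) : Set (Fin d → ℝ) := {x | ∀ t, 0 ≤ x t ∧ x t ≤ 1}

/-- `A = {w_1,…,w_m}` is a norming set for `𝒫_l(Ω)` with norming constant `c`. -/
def IsNorming {d : ℕ} (l : ℕ) (Ω : Set (Fin d → ℝ)) {m : ℕ}
    (w : Fin m → Fin d → ℝ) (c : ℝ) : Prop :=
  ∀ P : MvPolynomial (Fin d) ℝ, P.totalDegree ≤ l →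
    ∀ x ∈ Ω, |MvPolynomial.eval x P| ≤ c * ⨆ i : Fin m, |MvPolynomial.eval (w i) P|

/-- Axis-parallel cube with corner `z` and side length `s`. -/
def cube (d : ℕ) (z : Fin d → ℝ) (s : ℝ) : Set (Fin d → ℝ) :=
  {y | ∀ t, z t ≤ y t ∧ y t ≤ z t + s}

/-- Geometric hypotheses at scale `L` with constants `c_L, c_d, c_N`: `A ∪ {x}` lies in an
axis-parallel cube of side length at most `c_L·L`, the points `w_1,…,w_m, x` are pairwise at
`‖·‖_∞`-distance at least `c_d·L`, and `A` is a norming set for `𝒫_{⌊α⌋⁻}` of that cube with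
norming constant `c_N`. -/
def GeomHyp (α : ℝ) (d : ℕ) (cL cd cN L : ℝ) {m : ℕ}
    (w : Fin m → Fin d → ℝ) (x : Fin d → ℝ) : Prop :=
  ∃ z : Fin d → ℝ, ∃ s : ℝ, 0 ≤ s ∧ s ≤ cL * L ∧
    (∀ i, w i ∈ cube d z s) ∧ x ∈ cube d z s ∧
    (∀ i j, i ≠ j → ∃ t, cd * L ≤ |w i t - w j t|) ∧
    (∀ i, ∃ t, cd * L ≤ |w i t - x t|) ∧
    IsNorming (lbelow α) (cube d z s) w cN

/-- `f₀ ∈ C^β_1`: `f₀` is `⌊β⌋⁻`-times continuously differentiable, all partial derivatives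
of order `≤ ⌊β⌋⁻` are bounded by `1`, and the derivatives of order `⌊β⌋⁻` are
`(β−⌊β⌋⁻)`-Hölder with constant `1`. -/
def HolderBall (d : ℕ) (β : ℝ) (f : (Fin d → ℝ) → ℝ) : Prop :=
  ContDiff ℝ ((lbelow β : ℕ) : ℕ∞) f ∧
  (∀ k : Fin d → ℕ, (∑ j, k j) ≤ lbelow β → ∀ x : Fin d → ℝ, |mder d k f x| ≤ 1) ∧
  (∀ k : Fin d → ℕ, (∑ j, k j) = lbelow β → ∀ x y : Fin d → ℝ,
    |mder d k f x - mder d k f y| ≤ nrm (x - y) ^ (β - (lbelow β : ℝ)))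

/-- The spectral density of the Matérn kernel. -/
def maternDensity (α : ℝ) (d : ℕ) (ξ : Fin d → ℝ) : ℝ :=
  (1 + ∑ j, ξ j ^ 2) ^ (-(α + (d : ℝ) / 2))

/-- The plane wave `ξ ↦ exp(i⟨y, ξ⟩)`. -/
def wave {d : ℕ} (y ξ : Fin d → ℝ) : ℂ :=
  Complex.exp (((∑ t, y t * ξ t : ℝ) : ℂ) * Complex.I)

/-- The quadratic form of the Matérn kernel at the points `y` with coefficients `b`. -/
def maternForm (α : ℝ) (d : ℕ) {ι : Type*} [Fintype ι] (y : ι → Fin d → ℝ) (b : ι → ℝ) : ℝ :=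
  ∑ i, ∑ j, b i * b j * matern α d (y i - y j)

lemma one_le_one_add_sum_sq {d : ℕ} (ξ : Fin d → ℝ) : 1 ≤ 1 + ∑ j, ξ j ^ 2 := by
  have : 0 ≤ ∑ j, ξ j ^ 2 := Finset.sum_nonneg fun j _ => sq_nonneg _
  linarith

lemma maternDensity_pos (α : ℝ) {d : ℕ} (ξ : Fin d → ℝ) : 0 < maternDensity α d ξ :=
  Real.rpow_pos_of_pos (by linarith [one_le_one_add_sum_sq ξ]) _

lemma continuous_maternDensity (α : ℝ) (d : ℕ) : Continuous (maternDensity α d) := by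
  unfold maternDensity
  refine Continuous.rpow_const (by fun_prop) fun ξ => Or.inl ?_
  linarith [one_le_one_add_sum_sq ξ]

lemma norm_sq_le_sum_sq {d : ℕ} (ξ : Fin d → ℝ) : ‖ξ‖ ^ 2 ≤ ∑ j, ξ j ^ 2 := by
  have h : ‖ξ‖ ≤ √(∑ j, ξ j ^ 2) := by
    refine (pi_norm_le_iff_of_nonneg (Real.sqrt_nonneg _)).2 fun j => ?_
    rw [Real.norm_eq_abs]
    refine Real.abs_le_sqrt ?_
    exact Finset.single_le_sum (f := fun j => ξ j ^ 2) (fun j _ => sq_nonneg _) (Finset.mem_univ j)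
  calc ‖ξ‖ ^ 2 ≤ √(∑ j, ξ j ^ 2) ^ 2 := by gcongr
    _ = _ := Real.sq_sqrt (Finset.sum_nonneg fun j _ => sq_nonneg _)

lemma maternDensity_le (α : ℝ) (hα : 0 < α) {d : ℕ} (ξ : Fin d → ℝ) :
    maternDensity α d ξ ≤ (1 + ‖ξ‖ ^ 2) ^ (-(α + (d : ℝ) / 2)) := by
  unfold maternDensity
  refine Real.rpow_le_rpow_of_nonpos (by positivity) (by linarith [norm_sq_le_sum_sq ξ]) ?_
  have : (0 : ℝ) ≤ d := d.cast_nonneg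
  linarith

lemma integrable_norm_bracket (α : ℝ) (hα : 0 < α) (d : ℕ) :
    Integrable (fun ξ : Fin d → ℝ => (1 + ‖ξ‖ ^ 2) ^ (-(α + (d : ℝ) / 2))) := by
  have h := integrable_rpow_neg_one_add_norm_sq (E := Fin d → ℝ) (μ := volume)
    (r := 2 * α + d) (by simp; linarith)
  convert h using 3
  ring

lemma integrable_maternDensity (α : ℝ) (hα : 0 < α) (d : ℕ) :
    Integrable (maternDensity α d) := by
  refine (integrable_norm_bracket α hα d).mono'
    (continuous_maternDensity α d).aestronglyMeasurable (Filter.Eventually.of_forall fun ξ => ?_)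
  rw [Real.norm_of_nonneg (maternDensity_pos α ξ).le]
  exact maternDensity_le α hα ξ

lemma matern_neg (α : ℝ) (d : ℕ) (x : Fin d → ℝ) : matern α d (-x) = matern α d x := by
  simp [matern]

lemma matern_zero_pos (α : ℝ) (hα : 0 < α) (d : ℕ) : 0 < matern α d 0 := by
  have h0 : matern α d 0 = ∫ ξ, maternDensity α d ξ := by simp [matern, maternDensity]
  rw [h0, integral_pos_iff_support_of_nonneg (fun ξ => (maternDensity_pos α ξ).le)
    (integrable_maternDensity α hα d)]
  have : Function.support (maternDensity α d) = Set.univ := by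
    ext ξ; simp [(maternDensity_pos α ξ).ne']
  rw [this]
  exact isOpen_univ.measure_pos _ Set.univ_nonempty

lemma continuous_wave {d : ℕ} (y : Fin d → ℝ) : Continuous (wave y) := by
  unfold wave; fun_prop

lemma norm_wave {d : ℕ} (y ξ : Fin d → ℝ) : ‖wave y ξ‖ = 1 := Complex.norm_exp_ofReal_mul_I _

lemma norm_sq_sum_wave {d : ℕ} {ι : Type*} [Fintype ι] (y : ι → Fin d → ℝ) (b : ι → ℝ)
    (ξ : Fin d → ℝ) :
    ‖∑ i, (b i : ℂ) * wave (y i) ξ‖ ^ 2 =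
      ∑ i, ∑ j, b i * b j * Real.cos (∑ t, (y i - y j) t * ξ t) := by
  rw [Complex.sq_norm, Complex.normSq_apply]
  have hre : (∑ i, (b i : ℂ) * wave (y i) ξ).re = ∑ i, b i * Real.cos (∑ t, y i t * ξ t) := by
    rw [Complex.re_sum]
    refine Finset.sum_congr rfl fun i _ => ?_
    rw [Complex.re_ofReal_mul, wave, Complex.exp_ofReal_mul_I_re]
  have him : (∑ i, (b i : ℂ) * wave (y i) ξ).im = ∑ i, b i * Real.sin (∑ t, y i t * ξ t) := by
    rw [Complex.im_sum]
    refine Finset.sum_congr rfl fun i _ => ?_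
    rw [Complex.im_ofReal_mul, wave, Complex.exp_ofReal_mul_I_im]
  rw [hre, him, Finset.sum_mul_sum, Finset.sum_mul_sum, ← Finset.sum_add_distrib]
  refine Finset.sum_congr rfl fun i _ => ?_
  rw [← Finset.sum_add_distrib]
  refine Finset.sum_congr rfl fun j _ => ?_
  have : ∑ t, (y i - y j) t * ξ t = ∑ t, y i t * ξ t - ∑ t, y j t * ξ t := by
    rw [← Finset.sum_sub_distrib]
    exact Finset.sum_congr rfl fun t _ => by simp [sub_mul]
  rw [this, Real.cos_sub]
  ring

lemma norm_sum_wave_le {d : ℕ} {ι : Type*} [Fintype ι] (y : ι → Fin d → ℝ) (b : ι → ℝ)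
    (ξ : Fin d → ℝ) : ‖∑ i, (b i : ℂ) * wave (y i) ξ‖ ≤ ∑ i, |b i| := by
  refine (norm_sum_le _ _).trans (Finset.sum_le_sum fun i _ => ?_)
  simp [norm_wave]

lemma integrable_norm_sq_sum_wave (α : ℝ) (hα : 0 < α) {d : ℕ} {ι : Type*} [Fintype ι]
    (y : ι → Fin d → ℝ) (b : ι → ℝ) :
    Integrable fun ξ => ‖∑ i, (b i : ℂ) * wave (y i) ξ‖ ^ 2 * maternDensity α d ξ := by
  have hc : Continuous fun ξ => ‖∑ i, (b i : ℂ) * wave (y i) ξ‖ ^ 2 :=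
    ((continuous_finsetSum _ fun i _ => continuous_const.mul (continuous_wave (y i))).norm).pow 2
  refine (integrable_maternDensity α hα d).bdd_mul (c := (∑ i, |b i|) ^ 2)
    hc.aestronglyMeasurable (Filter.Eventually.of_forall fun ξ => ?_)
  rw [norm_pow, norm_norm]
  exact pow_le_pow_left₀ (norm_nonneg _) (norm_sum_wave_le y b ξ) 2

/-- The Matérn form is the weighted `L²`-norm of a sum of plane waves. -/
lemma maternForm_eq_integral (α : ℝ) (hα : 0 < α) {d : ℕ} {ι : Type*} [Fintype ι]
    (y : ι → Fin d → ℝ) (b : ι → ℝ) :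
    maternForm α d y b =
      ∫ ξ, ‖∑ i, (b i : ℂ) * wave (y i) ξ‖ ^ 2 * maternDensity α d ξ := by
  have hInt : ∀ z : Fin d → ℝ,
      Integrable fun ξ => Real.cos (∑ t, z t * ξ t) * maternDensity α d ξ := fun z => by
    refine (integrable_maternDensity α hα d).bdd_mul (c := 1)
      (Continuous.aestronglyMeasurable (by fun_prop)) (Filter.Eventually.of_forall fun ξ => ?_)
    exact Real.abs_cos_le_one _
  simp_rw [norm_sq_sum_wave, Finset.sum_mul, mul_assoc]
  rw [integral_finsetSum _ fun i _ => integrable_finsetSum _ fun j _ =>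
    ((hInt _).const_mul _).const_mul _, maternForm]
  refine Finset.sum_congr rfl fun i _ => ?_
  rw [integral_finsetSum _ fun j _ => ((hInt _).const_mul _).const_mul _]
  refine Finset.sum_congr rfl fun j _ => ?_
  rw [integral_const_mul, integral_const_mul, mul_assoc]
  rfl

lemma maternForm_nonneg (α : ℝ) (hα : 0 < α) {d : ℕ} {ι : Type*} [Fintype ι]
    (y : ι → Fin d → ℝ) (b : ι → ℝ) : 0 ≤ maternForm α d y b := by
  rw [maternForm_eq_integral α hα]
  exact integral_nonneg fun ξ => mul_nonneg (sq_nonneg _) (maternDensity_pos α ξ).le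

lemma maternForm_eq_dotProduct (α : ℝ) {d n : ℕ} (y : Fin n → Fin d → ℝ) (b : Fin n → ℝ) :
    maternForm α d y b = b ⬝ᵥ (maternMat α d y *ᵥ b) := by
  simp only [maternForm, dotProduct, mulVec, maternMat, of_apply, Finset.mul_sum]
  exact Finset.sum_congr rfl fun i _ => Finset.sum_congr rfl fun j _ => by ring

lemma isUnit_det_maternMat_of_form (α : ℝ) {d n : ℕ} (y : Fin n → Fin d → ℝ)
    (h : ∀ c, maternForm α d y c = 0 → c = 0) : IsUnit (maternMat α d y).det := by
  rw [isUnit_iff_ne_zero]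
  intro hdet
  obtain ⟨c, hc, hc0⟩ := Matrix.exists_mulVec_eq_zero_iff.2 hdet
  exact hc (h c (by rw [maternForm_eq_dotProduct, hc0, dotProduct_zero]))

/-- Kriging weights: the interpolation functional at `x` is given by weights `u` which are
close, in the energy norm, to any competing weights, and have bounded energy. -/
lemma kriging_weights (α : ℝ) (hα : 0 < α) {d n : ℕ} (y : Fin n → Fin d → ℝ) (x : Fin d → ℝ)
    (hdet : IsUnit (maternMat α d y).det) :
    ∃ u : Fin n → ℝ,
      (∀ f : Fin n → ℝ, (fun i => matern α d (x - y i)) ⬝ᵥ ((maternMat α d y)⁻¹ *ᵥ f) = u ⬝ᵥ f) ∧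
      maternForm α d y u ≤ matern α d 0 ∧
      ∀ v : Fin n → ℝ, maternForm α d y (v - u) ≤
        maternForm α d (fun o : Option (Fin n) => o.elim x y) (fun o => o.elim 1 (-v)) := by
  set K := maternMat α d y with hK
  set k : Fin n → ℝ := fun i => matern α d (x - y i) with hk
  have hsymm : Kᵀ = K := by
    ext i j
    simp only [hK, maternMat, transpose_apply, of_apply]
    rw [← matern_neg, neg_sub]
  set u := K⁻¹ *ᵥ k with hu
  have hKu : K *ᵥ u = k := by rw [hu, mulVec_mulVec, mul_nonsing_inv K hdet, one_mulVec]
  have hform : ∀ v : Fin n → ℝ,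
      maternForm α d (fun o : Option (Fin n) => o.elim x y) (fun o => o.elim 1 (-v)) =
        matern α d 0 - 2 * (v ⬝ᵥ k) + v ⬝ᵥ (K *ᵥ v) := by
    intro v
    have h1 : ∀ i, matern α d (y i - x) = k i := fun i => by rw [← matern_neg, neg_sub]
    have h2 : ∀ i, matern α d (x - y i) = k i := fun i => rfl
    have h3 : ∑ i, ∑ j, v i * v j * matern α d (y i - y j) = v ⬝ᵥ (K *ᵥ v) := by
      rw [hK, ← maternForm_eq_dotProduct]; rfl
    simp only [maternForm, Fintype.sum_option, Option.elim_none, Option.elim_some, sub_self,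
      Pi.neg_apply, h1, h2, Finset.sum_add_distrib, mul_one, one_mul, neg_mul, mul_neg,
      Finset.sum_neg_distrib, h3]
    simp only [dotProduct]
    ring
  have hadj : ∀ a b : Fin n → ℝ, a ⬝ᵥ (K *ᵥ b) = b ⬝ᵥ (K *ᵥ a) := fun a b => by
    rw [dotProduct_mulVec, ← mulVec_transpose, hsymm, dotProduct_comm]
  refine ⟨u, fun f => ?_, ?_, fun v => ?_⟩
  · rw [dotProduct_mulVec, ← mulVec_transpose, transpose_nonsing_inv, hsymm]
  · have h := maternForm_nonneg α hα (fun o : Option (Fin n) => o.elim x y)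
      (fun o => o.elim 1 (-u))
    rw [hform, ← hKu] at h
    rw [maternForm_eq_dotProduct]
    linarith
  · have h := maternForm_nonneg α hα (fun o : Option (Fin n) => o.elim x y)
      (fun o => o.elim 1 (-u))
    rw [hform, ← hKu] at h
    rw [hform, maternForm_eq_dotProduct, ← hKu, mulVec_sub, dotProduct_sub, sub_dotProduct,
      sub_dotProduct, hadj u v]
    linarith

/-- Multi-indices of total degree at most `l`. -/
def multiIdx (d l : ℕ) : Finset (Fin d → ℕ) :=
  (Finset.range (l + 1)).biUnion fun n => Finset.univ.piAntidiag n

/-- The monomial `y^k`. -/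
def monom {d : ℕ} (y : Fin d → ℝ) (k : Fin d → ℕ) : ℝ := ∏ j, y j ^ k j

/-- The polynomial function with coefficients `a`. -/
def polyFun {d l : ℕ} (a : multiIdx d l → ℝ) (y : Fin d → ℝ) : ℝ := ∑ k, a k * monom y k

lemma mem_multiIdx {d l : ℕ} {k : Fin d → ℕ} : k ∈ multiIdx d l ↔ ∑ j, k j ≤ l := by
  simp [multiIdx]

lemma pairwiseDisjoint_piAntidiag (d : ℕ) (s : Set ℕ) :
    s.PairwiseDisjoint fun n => (Finset.univ : Finset (Fin d)).piAntidiag n := by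
  intro a _ b _ hab
  refine Finset.disjoint_left.2 fun k hk hk' => hab ?_
  simp only [Finset.mem_piAntidiag] at hk hk'
  rw [← hk.1, ← hk'.1]

lemma card_multiIdx (d l : ℕ) (hd : 1 ≤ d) : (multiIdx d l).card = (l + d).choose l := by
  obtain ⟨e, rfl⟩ := Nat.exists_eq_add_of_le' hd
  rw [multiIdx, Finset.card_biUnion fun a ha b hb hab =>
    pairwiseDisjoint_piAntidiag _ (Finset.range (l + 1)) ha hb hab]
  have hcard : ∀ n, ((Finset.univ : Finset (Fin (e + 1))).piAntidiag n).card =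
      (e + n).choose n := by
    intro n
    have h := Finset.card_finsuppAntidiag_nat_eq_choose
      (s := (Finset.univ : Finset (Fin (e + 1)))) n
    rw [Finset.card_univ, Fintype.card_fin, show e + 1 + n - 1 = e + n by lia] at h
    rw [← h]
    refine (Finset.card_bij (fun (f : Fin (e + 1) →₀ ℕ) _ => (f : Fin (e + 1) → ℕ)) ?_ ?_ ?_).symm
    · intro f hf
      simpa [Finset.mem_finsuppAntidiag] using hf
    · exact fun f _ g _ hfg => DFunLike.coe_injective hfg
    · exact fun k hk => ⟨Finsupp.equivFunOnFinite.symm k, by simpa using hk, rfl⟩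
  simp_rw [hcard]
  induction l with
  | zero => simp
  | succ l ih =>
    rw [Finset.sum_range_succ, ih, show l + 1 + (e + 1) = (l + (e + 1)) + 1 by ring,
      Nat.choose_succ_succ, show e + (l + 1) = l + (e + 1) by ring]

lemma continuous_polyFun {d l : ℕ} :
    Continuous fun p : (multiIdx d l → ℝ) × (Fin d → ℝ) => polyFun p.1 p.2 := by
  unfold polyFun monom; fun_prop

lemma abs_monom_le_one {d : ℕ} {y : Fin d → ℝ} (hy : y ∈ Set.Icc (0 : Fin d → ℝ) 1)
    (k : Fin d → ℕ) : |monom y k| ≤ 1 := by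
  rw [monom, Finset.abs_prod]
  refine Finset.prod_le_one (fun j _ => abs_nonneg _) fun j _ => ?_
  rw [abs_pow, abs_of_nonneg (hy.1 j)]
  exact pow_le_one₀ (hy.1 j) (hy.2 j)

lemma monom_smul {d : ℕ} (r : ℝ) (y : Fin d → ℝ) (k : Fin d → ℕ) :
    monom (r • y) k = r ^ (∑ j, k j) * monom y k := by
  simp [monom, mul_pow, Finset.prod_mul_distrib, Finset.prod_pow_eq_pow_sum]

lemma exists_polyFun_ne_zero {d l : ℕ} (a : multiIdx d l → ℝ) (ha : a ≠ 0) :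
    ∃ y ∈ Set.univ.pi fun _ : Fin d => Set.Ioo (0 : ℝ) 1, polyFun a y ≠ 0 := by
  by_contra! h
  apply ha
  set P : MvPolynomial (Fin d) ℝ :=
    ∑ k : multiIdx d l, MvPolynomial.monomial (Finsupp.equivFunOnFinite.symm k.1) (a k) with hP
  have heval : ∀ y, MvPolynomial.eval y P = polyFun a y := fun y => by
    simp only [hP, map_sum, polyFun, monom, MvPolynomial.eval_monomial]
    refine Finset.sum_congr rfl fun k _ => ?_
    rw [Finsupp.prod_fintype _ _ (by simp)]
    rfl
  have h0 : P = 0 := MvPolynomial.funext_set (fun _ => Set.Ioo (0 : ℝ) 1)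
    (fun _ => Set.Ioo_infinite one_pos) fun y hy => by rw [heval, h y hy, map_zero]
  ext k
  have := congrArg (MvPolynomial.coeff (Finsupp.equivFunOnFinite.symm k.1)) h0
  rw [hP, MvPolynomial.coeff_sum] at this
  simpa [MvPolynomial.coeff_monomial, Finset.sum_ite_eq', Subtype.val_injective.eq_iff] using this

lemma integral_polyFun_sq_pos {d l : ℕ} (a : multiIdx d l → ℝ) (ha : a ≠ 0) :
    0 < ∫ y in Set.Icc (0 : Fin d → ℝ) 1, polyFun a y ^ 2 := by
  obtain ⟨y, hy, hne⟩ := exists_polyFun_ne_zero a ha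
  have hc : Continuous fun y => polyFun a y ^ 2 :=
    (continuous_polyFun.comp (Continuous.prodMk_right a)).pow 2
  rw [setIntegral_pos_iff_support_of_nonneg_ae
    (Filter.Eventually.of_forall fun y => sq_nonneg _)
    (hc.continuousOn.integrableOn_compact isCompact_Icc)]
  have ho : IsOpen (Function.support (fun y => polyFun a y ^ 2) ∩
      Set.univ.pi fun _ : Fin d => Set.Ioo (0 : ℝ) 1) :=
    (hc.isOpen_support).inter (isOpen_set_pi Set.finite_univ fun _ _ => isOpen_Ioo)
  refine (ho.measure_pos volume ⟨y, by simpa using hne, hy⟩).trans_le (measure_mono ?_)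
  refine Set.inter_subset_inter_right _ fun z hz => ?_
  exact ⟨fun t => (hz t trivial).1.le, fun t => (hz t trivial).2.le⟩

/-- On the unit cube, the `L²`-norm of a polynomial controls its coefficients. -/
lemma exists_coeff_sq_le_integral (d l : ℕ) :
    ∃ κ : ℝ, 0 < κ ∧ ∀ (a : multiIdx d l → ℝ) (k : multiIdx d l),
      κ * a k ^ 2 ≤ ∫ y in Set.Icc (0 : Fin d → ℝ) 1, polyFun a y ^ 2 := by
  set Φ : (multiIdx d l → ℝ) → ℝ := fun a => ∫ y in Set.Icc (0 : Fin d → ℝ) 1, polyFun a y ^ 2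
    with hΦ
  have hcont : Continuous Φ := continuous_parametric_integral_of_continuous
    (f := fun a y => polyFun a y ^ 2) (continuous_polyFun.pow 2) isCompact_Icc
  have : Nonempty (multiIdx d l) := ⟨⟨0, by simp [mem_multiIdx]⟩⟩
  obtain ⟨a₀, ha₀, hmin⟩ := (isCompact_sphere (0 : multiIdx d l → ℝ) 1).exists_isMinOn
    ((NormedSpace.sphere_nonempty (x := (0 : multiIdx d l → ℝ)) (r := 1)).2 zero_le_one)
    hcont.continuousOn
  refine ⟨Φ a₀, integral_polyFun_sq_pos a₀ ?_, fun a k => ?_⟩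
  · rintro rfl; simp at ha₀
  · by_cases ha : a = 0
    · subst ha; simp [polyFun]
    have hpos : 0 < ‖a‖ := norm_pos_iff.2 ha
    have h1 : Φ a₀ ≤ Φ (‖a‖⁻¹ • a) := hmin (by simp [norm_smul, hpos.ne'])
    have h2 : Φ (‖a‖⁻¹ • a) = (‖a‖⁻¹) ^ 2 * Φ a := by
      simp only [hΦ]
      rw [← integral_const_mul]
      congr 1
      ext y
      rw [← mul_pow]
      congr 1
      simp [polyFun, Finset.mul_sum, mul_assoc]
    have h3 : a k ^ 2 ≤ ‖a‖ ^ 2 := by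
      rw [← sq_abs]
      exact pow_le_pow_left₀ (abs_nonneg _) (norm_le_pi_norm a k) 2
    calc Φ a₀ * a k ^ 2 ≤ ((‖a‖⁻¹) ^ 2 * Φ a) * ‖a‖ ^ 2 := by
          have : 0 ≤ Φ a₀ := integral_nonneg fun y => sq_nonneg _
          rw [h2] at h1
          gcongr
      _ = Φ a := by field_simp

/-- A norming hypothesis in coordinates on the unit cube. -/
def CubeNorming (l : ℕ) {d n : ℕ} (w : Fin n → Fin d → ℝ) (c : ℝ) : Prop :=
  ∀ a : multiIdx d l → ℝ, ∀ y ∈ Set.Icc (0 : Fin d → ℝ) 1,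
    |polyFun a y| ≤ c * ⨆ i, |polyFun a (w i)|

lemma IsNorming.cubeNorming {d l n : ℕ} {z : Fin d → ℝ} {s c : ℝ} (hs : 0 < s)
    {w : Fin n → Fin d → ℝ} (h : IsNorming l (cube d z s) w c) :
    CubeNorming l (fun i t => (w i t - z t) / s) c := by
  intro a y hy
  set P : MvPolynomial (Fin d) ℝ := ∑ k : multiIdx d l, MvPolynomial.C (a k) *
    ∏ j, (MvPolynomial.C s⁻¹ * (MvPolynomial.X j - MvPolynomial.C (z j))) ^ k.1 j with hP
  have heval : ∀ x, MvPolynomial.eval x P = polyFun a (fun t => (x t - z t) / s) := fun x => by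
    simp only [hP, map_sum, polyFun, monom, map_mul, map_prod, map_pow, map_sub,
      MvPolynomial.eval_C, MvPolynomial.eval_X]
    refine Finset.sum_congr rfl fun k _ => ?_
    congr 1
    exact Finset.prod_congr rfl fun j _ => by rw [div_eq_inv_mul]
  have hdeg : P.totalDegree ≤ l := by
    refine MvPolynomial.totalDegree_finsetSum_le fun k _ => ?_
    refine (MvPolynomial.totalDegree_mul _ _).trans ?_
    rw [MvPolynomial.totalDegree_C, zero_add]
    refine (MvPolynomial.totalDegree_finsetProd _ _).trans ?_
    refine le_trans (Finset.sum_le_sum fun j _ => ?_) (mem_multiIdx.1 k.2)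
    refine (MvPolynomial.totalDegree_pow _ _).trans ?_
    refine mul_le_of_le_one_right (Nat.zero_le _) ?_
    refine (MvPolynomial.totalDegree_mul _ _).trans ?_
    rw [MvPolynomial.totalDegree_C, zero_add]
    exact (MvPolynomial.totalDegree_sub_C_le _ _).trans (MvPolynomial.totalDegree_X _).le
  have := h P hdeg (fun t => z t + s * y t) fun t =>
    ⟨by nlinarith [hy.1 t, show (0 : Fin d → ℝ) t = 0 from rfl],
      by nlinarith [hy.2 t, show (1 : Fin d → ℝ) t = 1 from rfl]⟩
  simp_rw [heval] at this
  simpa [hs.ne'] using this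

/-- Quantitative unisolvence: the Vandermonde system of a norming set with as many points as
there are monomials has a bounded inverse. -/
lemma exists_vandermonde_inverse (d l : ℕ) (hd : 1 ≤ d) (cN : ℝ) (hcN : 0 < cN) :
    ∃ B : ℝ, 0 < B ∧ ∀ w : Fin ((l + d).choose l) → Fin d → ℝ,
      CubeNorming l w cN →
      ∃ V : multiIdx d l → Fin ((l + d).choose l) → ℝ, (∀ k i, |V k i| ≤ B) ∧
        (∀ k k' : multiIdx d l, ∑ i, V k i * monom (w i) k' = if k = k' then 1 else 0) ∧
        (∀ i j, ∑ k, V k i * monom (w j) k = if i = j then 1 else 0) := by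
  obtain ⟨κ, hκ, hcoef⟩ := exists_coeff_sq_le_integral d l
  refine ⟨cN / √κ, by positivity, fun w hw => ?_⟩
  have hbound : ∀ (a : multiIdx d l → ℝ) (M : ℝ), 0 ≤ M → (∀ i, |polyFun a (w i)| ≤ M) →
      ∀ k, |a k| ≤ cN / √κ * M := by
    intro a M hM0 hM k
    have hsup : ∀ y ∈ Set.Icc (0 : Fin d → ℝ) 1, |polyFun a y| ≤ cN * M := fun y hy =>
      (hw a y hy).trans (mul_le_mul_of_nonneg_left (Real.iSup_le hM hM0) hcN.le)
    have h1 : ∫ y in Set.Icc (0 : Fin d → ℝ) 1, polyFun a y ^ 2 ≤ (cN * M) ^ 2 := by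
      have := norm_setIntegral_le_of_norm_le_const (μ := volume) (C := (cN * M) ^ 2)
        (f := fun y => polyFun a y ^ 2) (s := Set.Icc (0 : Fin d → ℝ) 1)
        (isCompact_Icc.measure_lt_top) (fun y hy => by
          rw [norm_pow]; exact pow_le_pow_left₀ (norm_nonneg _) (hsup y hy) 2)
      refine (le_abs_self _).trans (this.trans_eq ?_)
      rw [Measure.real, Real.volume_Icc_pi]
      simp
    have h2 := (hcoef a k).trans h1
    rw [div_mul_eq_mul_div, le_div_iff₀ (by positivity)]
    refine (le_abs_self _).trans (abs_le_of_sq_le_sq ?_ (by positivity))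
    rw [mul_pow, Real.sq_sqrt hκ.le, sq_abs]
    linarith
  set T : (multiIdx d l → ℝ) →ₗ[ℝ] (Fin ((l + d).choose l) → ℝ) :=
    { toFun := fun a i => polyFun a (w i)
      map_add' := fun a b => by ext i; simp [polyFun, add_mul, Finset.sum_add_distrib]
      map_smul' := fun r a => by ext i; simp [polyFun, Finset.mul_sum, mul_assoc] } with hT
  have hTa : ∀ a i, T a i = polyFun a (w i) := fun _ _ => rfl
  have hinj : Function.Injective T := by
    rw [injective_iff_map_eq_zero]
    intro a ha
    ext k
    have := hbound a 0 le_rfl (fun i => by rw [← hTa, ha]; simp) k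
    simpa using this
  set e := T.linearEquivOfInjective hinj (by
    simp [card_multiIdx d l hd]) with he
  have heT : ∀ a, e a = T a := fun a => rfl
  refine ⟨fun k i => e.symm (Pi.single i 1) k, fun k i => ?_, fun k k' => ?_, fun i j => ?_⟩
  · have := hbound (e.symm (Pi.single i 1)) 1 zero_le_one (fun j => by
      rw [← hTa, ← heT, LinearEquiv.apply_symm_apply, Pi.single_apply]
      split_ifs <;> simp) k
    simpa using this
  · have h1 : e (Pi.single k' 1) = ∑ i, monom (w i) k' • Pi.single i (1 : ℝ) := by
      ext i
      simp [heT, hTa, polyFun, Pi.single_apply]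
    have h2 := congrArg e.symm h1
    rw [LinearEquiv.symm_apply_apply, map_sum] at h2
    have h3 := congrFun h2 k
    simp only [map_smul, Finset.sum_apply, Pi.smul_apply, smul_eq_mul, Pi.single_apply] at h3
    rw [h3]
    exact Finset.sum_congr rfl fun i _ => mul_comm _ _
  · have : polyFun (e.symm (Pi.single i 1)) (w j) = (Pi.single i (1 : ℝ) : _ → ℝ) j := by
      rw [← hTa, ← heT, LinearEquiv.apply_symm_apply]
    rw [polyFun, Pi.single_apply] at this
    simpa [eq_comm] using this

/-- The moment `∑ᵢ cᵢ wᵢ^k`. -/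
def moment {d : ℕ} {ι : Type*} [Fintype ι] (w : ι → Fin d → ℝ) (c : ι → ℝ) (k : Fin d → ℕ) : ℝ :=
  ∑ i, c i * monom (w i) k

/-- The coefficient `1/k!` of the exponential series, in multinomial form. -/
def expCoeff {d : ℕ} (k : Fin d → ℕ) : ℝ :=
  (Nat.multinomial Finset.univ k : ℝ) / (∑ j, k j).factorial

lemma le_expCoeff {d l : ℕ} (k : multiIdx d l) : 1 / (l.factorial : ℝ) ≤ expCoeff k.1 := by
  unfold expCoeff
  have h1 : (1 : ℝ) ≤ Nat.multinomial Finset.univ k.1 := by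
    exact_mod_cast Nat.multinomial_pos _ _
  have h2 : ((∑ j, k.1 j).factorial : ℝ) ≤ l.factorial := by
    exact_mod_cast Nat.factorial_le (mem_multiIdx.1 k.2)
  have h3 : (0 : ℝ) < (∑ j, k.1 j).factorial := by positivity
  gcongr

lemma sum_exp_series_eq {d : ℕ} (l : ℕ) (y ξ : Fin d → ℝ) :
    ∑ n ∈ Finset.range (l + 1), (((∑ t, y t * ξ t : ℝ) : ℂ) * Complex.I) ^ n / n.factorial =
      ∑ k : multiIdx d l, ((expCoeff k.1 * monom ξ k * monom y k : ℝ) : ℂ) *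
        Complex.I ^ (∑ j, k.1 j) := by
  rw [Finset.sum_coe_sort (multiIdx d l) fun k =>
    ((expCoeff k * monom ξ k * monom y k : ℝ) : ℂ) * Complex.I ^ (∑ j, k j), multiIdx,
    Finset.sum_biUnion (pairwiseDisjoint_piAntidiag d _)]
  refine Finset.sum_congr rfl fun n _ => ?_
  rw [mul_pow, ← Complex.ofReal_pow, Finset.sum_pow_eq_sum_piAntidiag, Complex.ofReal_sum,
    Finset.sum_mul, Finset.sum_div]
  refine Finset.sum_congr rfl fun k hk => ?_
  have hk' : ∑ j, k j = n := (Finset.mem_piAntidiag.1 hk).1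
  simp only [expCoeff, monom, hk', mul_pow, Finset.prod_mul_distrib]
  push_cast
  ring

/-- Taylor expansion of a sum of plane waves in terms of the moments of the coefficients. -/
lemma norm_sum_wave_sub_le {d : ℕ} {ι : Type*} [Fintype ι] (l : ℕ) (y : ι → Fin d → ℝ)
    (b : ι → ℝ) (ξ : Fin d → ℝ) (T : ℝ) (hT : ∀ i, |∑ t, y i t * ξ t| ≤ T) :
    ‖∑ i, (b i : ℂ) * wave (y i) ξ - ∑ k : multiIdx d l,
        ((expCoeff k.1 * monom ξ k * moment y b k : ℝ) : ℂ) * Complex.I ^ (∑ j, k.1 j)‖ ≤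
      (∑ i, |b i|) * (T ^ (l + 1) * Real.exp T) := by
  have h : ∑ k : multiIdx d l,
        ((expCoeff k.1 * monom ξ k * moment y b k : ℝ) : ℂ) * Complex.I ^ (∑ j, k.1 j) =
      ∑ i, (b i : ℂ) * ∑ n ∈ Finset.range (l + 1),
        (((∑ t, y i t * ξ t : ℝ) : ℂ) * Complex.I) ^ n / n.factorial := by
    simp_rw [sum_exp_series_eq, Finset.mul_sum]
    rw [Finset.sum_comm]
    refine Finset.sum_congr rfl fun k _ => ?_
    simp only [moment]
    push_cast
    rw [Finset.mul_sum, Finset.sum_mul]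
    exact Finset.sum_congr rfl fun i _ => by ring
  rw [h, ← Finset.sum_sub_distrib, Finset.sum_mul]
  refine (norm_sum_le _ _).trans (Finset.sum_le_sum fun i _ => ?_)
  rw [← mul_sub, norm_mul, Complex.norm_real, Real.norm_eq_abs]
  refine mul_le_mul_of_nonneg_left ?_ (abs_nonneg _)
  refine (Complex.norm_exp_sub_sum_le_norm_mul_exp _ _).trans ?_
  have : ‖((∑ t, y i t * ξ t : ℝ) : ℂ) * Complex.I‖ = |∑ t, y i t * ξ t| := by
    rw [norm_mul, Complex.norm_I, mul_one, Complex.norm_real, Real.norm_eq_abs]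
  rw [this]
  have hT0 : 0 ≤ T := (abs_nonneg _).trans (hT i)
  gcongr
  · exact hT i
  · exact hT i

lemma abs_sum_mul_le {d : ℕ} {y ξ : Fin d → ℝ} (hy : y ∈ Set.Icc (0 : Fin d → ℝ) 1) {a : ℝ}
    (hξ : ‖ξ‖ ≤ a) : |∑ t, y t * ξ t| ≤ d * a := by
  calc |∑ t, y t * ξ t| ≤ ∑ t : Fin d, |y t * ξ t| := Finset.abs_sum_le_sum_abs _ _
    _ ≤ ∑ _t : Fin d, a := Finset.sum_le_sum fun t _ => by
        rw [abs_mul, abs_of_nonneg (hy.1 t)]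
        have h1 : |ξ t| ≤ a := (norm_le_pi_norm ξ t).trans hξ
        calc y t * |ξ t| ≤ 1 * |ξ t| := mul_le_mul_of_nonneg_right (hy.2 t) (abs_nonneg _)
          _ ≤ a := by rwa [one_mul]
    _ = d * a := by simp

lemma moment_smul {d : ℕ} {ι : Type*} [Fintype ι] (h : ℝ) (w : ι → Fin d → ℝ) (c : ι → ℝ)
    (k : Fin d → ℕ) : moment (fun i => h • w i) c k = h ^ (∑ j, k j) * moment w c k := by
  simp only [moment, monom_smul, Finset.mul_sum]
  exact Finset.sum_congr rfl fun i _ => by ring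

lemma sq_re_one_sub_I_mul_le (z : ℂ) : ((1 - Complex.I) * z).re ^ 2 ≤ 2 * ‖z‖ ^ 2 := by
  rw [Complex.sq_norm, Complex.normSq_apply]
  simp
  nlinarith [sq_nonneg (z.re - z.im)]

lemma sq_re_one_sub_I_mul_I_pow (n : ℕ) : ((1 - Complex.I) * Complex.I ^ n).re ^ 2 = 1 := by
  rw [← Nat.div_add_mod n 4, pow_add, pow_mul, Complex.I_pow_four, one_pow, one_mul]
  have : n % 4 < 4 := Nat.mod_lt _ (by norm_num)
  interval_cases n % 4 <;> simp [pow_succ]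

/-- Coefficients are controlled by moments. -/
lemma abs_coeff_le_of_moment {d l n : ℕ} {w : Fin n → Fin d → ℝ} {B : ℝ}
    {V : multiIdx d l → Fin n → ℝ} (hVB : ∀ k i, |V k i| ≤ B)
    (hV : ∀ i j, ∑ k, V k i * monom (w j) k = if i = j then 1 else 0)
    (c : Fin n → ℝ) (i : Fin n) : |c i| ≤ ∑ k : multiIdx d l, B * |moment w c k| := by
  have h : c i = ∑ k : multiIdx d l, V k i * moment w c k := by
    simp only [moment, Finset.mul_sum]
    rw [Finset.sum_comm]
    calc c i = ∑ j, c j * ∑ k, V k i * monom (w j) k := by simp_rw [hV]; simp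
      _ = _ := by
        refine Finset.sum_congr rfl fun j _ => ?_
        rw [Finset.mul_sum]
        exact Finset.sum_congr rfl fun k _ => by ring
  rw [h]
  refine (Finset.abs_sum_le_sum_abs _ _).trans (Finset.sum_le_sum fun k _ => ?_)
  rw [abs_mul]
  exact mul_le_mul_of_nonneg_right (hVB k i) (abs_nonneg _)

open scoped Pointwise in
/-- The energy dominates the `L²`-norm of the wave sum over a small cube of frequencies. -/
lemma le_maternForm_of_cube (α : ℝ) (hα : 0 < α) {d n : ℕ} (y : Fin n → Fin d → ℝ)
    (c : Fin n → ℝ) {r : ℝ} (hr : 0 < r) (hr1 : r ≤ 1) :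
    (1 + (d : ℝ)) ^ (-(α + (d : ℝ) / 2)) * (r ^ d *
      ∫ η in Set.Icc (0 : Fin d → ℝ) 1, ‖∑ i, (c i : ℂ) * wave (y i) (r • η)‖ ^ 2) ≤
      maternForm α d y c := by
  set F : (Fin d → ℝ) → ℝ := fun ξ => ‖∑ i, (c i : ℂ) * wave (y i) ξ‖ ^ 2 with hF
  have hFc : Continuous F :=
    ((continuous_finsetSum _ fun i _ => continuous_const.mul (continuous_wave (y i))).norm).pow 2
  have h1 := Measure.setIntegral_comp_smul_of_pos (volume : Measure (Fin d → ℝ)) F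
    (Set.Icc (0 : Fin d → ℝ) 1) hr
  have h2 : r ^ d * ∫ η in Set.Icc (0 : Fin d → ℝ) 1, F (r • η) =
      ∫ ξ in r • Set.Icc (0 : Fin d → ℝ) 1, F ξ := by
    rw [h1]
    simp only [Module.finrank_fintype_fun_eq_card, Fintype.card_fin, smul_eq_mul]
    field_simp
  have hcomp : IsCompact (r • Set.Icc (0 : Fin d → ℝ) 1) := isCompact_Icc.smul r
  have hInt := integrable_norm_sq_sum_wave α hα y c
  rw [h2, maternForm_eq_integral α hα, ← integral_const_mul]
  refine (setIntegral_mono_on ((continuous_const.mul hFc).continuousOn.integrableOn_compact hcomp)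
    hInt.integrableOn hcomp.measurableSet fun ξ hξ => ?_).trans
    (setIntegral_le_integral hInt (Filter.Eventually.of_forall fun ξ =>
      mul_nonneg (sq_nonneg _) (maternDensity_pos α ξ).le))
  rw [mul_comm]
  refine mul_le_mul_of_nonneg_left ?_ (sq_nonneg _)
  obtain ⟨η, hη, rfl⟩ := hξ
  unfold maternDensity
  refine Real.rpow_le_rpow_of_nonpos (by linarith [one_le_one_add_sum_sq (r • η)]) ?_ ?_
  · have : ∑ j, (r • η) j ^ 2 ≤ ∑ _j : Fin d, (1 : ℝ) := Finset.sum_le_sum fun j _ => by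
      have h0 := hη.1 j
      have h1 := hη.2 j
      simp only [Pi.zero_apply, Pi.one_apply] at h0 h1
      simp only [Pi.smul_apply, smul_eq_mul]
      exact pow_le_one₀ (by positivity) (mul_le_one₀ hr1 h0 h1)
    simpa using this
  · have : (0 : ℝ) ≤ d := d.cast_nonneg
    linarith

/-- Low frequencies of the energy control all scaled moments. -/
lemma exists_moment_sq_le_maternForm (α : ℝ) (hα : 0 < α) (d l : ℕ) (hd : 1 ≤ d) (cN : ℝ)
    (hcN : 0 < cN) (H : ℝ) (hH : 0 < H) :
    ∃ κ : ℝ, 0 < κ ∧ ∀ w : Fin ((l + d).choose l) → Fin d → ℝ,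
      (∀ i, w i ∈ Set.Icc (0 : Fin d → ℝ) 1) → CubeNorming l w cN →
      ∀ h : ℝ, 0 < h → h ≤ H → ∀ c : Fin ((l + d).choose l) → ℝ, ∀ k : multiIdx d l,
        κ * (h ^ (∑ j, k.1 j) * |moment w c k|) ^ 2 ≤ maternForm α d (fun i => h • w i) c := by
  obtain ⟨κ₀, hκ₀, hcoef⟩ := exists_coeff_sq_le_integral d l
  obtain ⟨B, hB, hvand⟩ := exists_vandermonde_inverse d l hd cN hcN
  set m := (l + d).choose l with hm
  have hm0 : 0 < m := Nat.choose_pos (by lia)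
  have hd0 : (0 : ℝ) < d := by exact_mod_cast hd
  set D : ℝ := (d : ℝ) ^ (l + 1) * Real.exp d with hD
  set C : ℝ := D * (m * (m * B)) with hC
  have hC0 : 0 < C := by positivity
  set f : ℝ := (l.factorial : ℝ) with hf
  have hf0 : 0 < f := by positivity
  set δ : ℝ := min 1 (√(κ₀ / 8) / (f * C)) with hδ
  have hδ0 : 0 < δ := by positivity
  have hδ1 : δ ≤ 1 := min_le_left _ _
  have hδ2 : (C * δ) ^ 2 ≤ κ₀ / (8 * f ^ 2) := by
    have h1 : C * δ ≤ √(κ₀ / 8) / f := by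
      calc C * δ ≤ C * (√(κ₀ / 8) / (f * C)) := by gcongr; exact min_le_right _ _
        _ = _ := by field_simp
    calc (C * δ) ^ 2 ≤ (√(κ₀ / 8) / f) ^ 2 := by gcongr
      _ = _ := by rw [div_pow, Real.sq_sqrt (by positivity)]; field_simp
  set r : ℝ := min 1 (δ / H) with hr
  have hr0 : 0 < r := by positivity
  have hr1 : r ≤ 1 := min_le_left _ _
  set ρ : ℝ := (1 + (d : ℝ)) ^ (-(α + (d : ℝ) / 2)) with hρ
  have hρ0 : 0 < ρ := by positivity
  refine ⟨ρ * (r ^ d * (κ₀ / (8 * f ^ 2))) * (r ^ l) ^ 2, by positivity, ?_⟩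
  intro w hw hN h hh0 hhH c k
  obtain ⟨V, hVB, -, hV⟩ := hvand w hN
  set θ : ℝ := h * r with hθ
  have hθ0 : 0 < θ := by positivity
  have hθδ : θ ≤ δ := by
    calc θ ≤ H * (δ / H) := by
          refine mul_le_mul hhH (min_le_right _ _) hr0.le hH.le
      _ = δ := by field_simp
  have hθ1 : θ ≤ 1 := hθδ.trans hδ1
  obtain ⟨k₀, -, hk₀⟩ := Finset.exists_max_image Finset.univ
    (fun k : multiIdx d l => θ ^ (∑ j, k.1 j) * |moment w c k|) ⟨k, Finset.mem_univ _⟩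
  set A : ℝ := θ ^ (∑ j, k₀.1 j) * |moment w c k₀| with hA
  have hA0 : 0 ≤ A := by positivity
  have hkA : ∀ k : multiIdx d l, θ ^ (∑ j, k.1 j) * |moment w c k| ≤ A :=
    fun k => hk₀ k (Finset.mem_univ _)
  have hsum : (∑ i, |c i|) * θ ^ (l + 1) ≤ m * (m * B) * (θ * A) := by
    have h1 : ∀ i, |c i| * θ ^ (l + 1) ≤ m * B * (θ * A) := by
      intro i
      calc |c i| * θ ^ (l + 1) ≤ (∑ k : multiIdx d l, B * |moment w c k|) * θ ^ (l + 1) := by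
            gcongr; exact abs_coeff_le_of_moment hVB hV c i
        _ = ∑ k : multiIdx d l, B * (θ * (θ ^ l * |moment w c k|)) := by
            rw [Finset.sum_mul]; exact Finset.sum_congr rfl fun k _ => by ring
        _ ≤ ∑ _k : multiIdx d l, B * (θ * A) := by
            refine Finset.sum_le_sum fun k _ => ?_
            gcongr
            refine le_trans ?_ (hkA k)
            gcongr ?_ * _
            exact pow_le_pow_of_le_one hθ0.le hθ1 (mem_multiIdx.1 k.2)
        _ = m * B * (θ * A) := by
            rw [Finset.sum_const, Finset.card_univ, Fintype.card_coe, card_multiIdx d l hd,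
              nsmul_eq_mul, ← hm]
            ring
    rw [Finset.sum_mul]
    calc ∑ i, |c i| * θ ^ (l + 1) ≤ ∑ _i : Fin m, m * B * (θ * A) :=
          Finset.sum_le_sum fun i _ => h1 i
      _ = _ := by simp; ring
  set P : (Fin d → ℝ) → ℂ := fun η => ∑ k : multiIdx d l,
    ((expCoeff k.1 * monom η k * moment (fun i => θ • w i) c k : ℝ) : ℂ) *
      Complex.I ^ (∑ j, k.1 j) with hP
  set a : multiIdx d l → ℝ := fun k => expCoeff k.1 * moment (fun i => θ • w i) c k *
    ((1 - Complex.I) * Complex.I ^ (∑ j, k.1 j)).re with ha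
  have hPa : ∀ η, ((1 - Complex.I) * P η).re = polyFun a η := by
    intro η
    simp only [hP, ha, polyFun, Finset.mul_sum, Complex.re_sum]
    refine Finset.sum_congr rfl fun k _ => ?_
    rw [mul_left_comm, Complex.re_ofReal_mul]
    ring
  have hak : A ^ 2 / f ^ 2 ≤ a k₀ ^ 2 := by
    simp only [ha]
    rw [mul_pow _ (Complex.re _), sq_re_one_sub_I_mul_I_pow, mul_one, moment_smul, mul_pow (expCoeff _)]
    have h1 := le_expCoeff k₀
    have h2 : A ^ 2 = (θ ^ (∑ j, k₀.1 j) * moment w c k₀) ^ 2 := by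
      simp only [hA, mul_pow, sq_abs]
    rw [← h2, div_eq_inv_mul]
    gcongr ?_ * _
    rw [← inv_pow, ← one_div]
    gcongr
  have hrem : ∀ η ∈ Set.Icc (0 : Fin d → ℝ) 1,
      polyFun a η ^ 2 ≤ 4 * ‖∑ i, (c i : ℂ) * wave (h • w i) (r • η)‖ ^ 2 +
        4 * (C * δ * A) ^ 2 := by
    intro η hη
    have hηn : ‖η‖ ≤ 1 := (pi_norm_le_iff_of_nonneg zero_le_one).2 fun t => by
      rw [Real.norm_eq_abs, abs_of_nonneg (hη.1 t)]; exact hη.2 t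
    have hwave : ∀ i, wave (h • w i) (r • η) = wave (θ • w i) η := fun i => by
      simp only [wave, hθ, Pi.smul_apply, smul_eq_mul]
      congr 3
      exact Finset.sum_congr rfl fun t _ => by ring
    simp_rw [hwave]
    have h1 := norm_sum_wave_sub_le l (fun i => θ • w i) c η (d * θ) fun i => by
      have : ∑ t, (θ • w i) t * η t = ∑ t, w i t * (θ • η) t :=
        Finset.sum_congr rfl fun t _ => by simp; ring
      rw [this]
      refine abs_sum_mul_le (hw i) ?_
      rw [norm_smul, Real.norm_of_nonneg hθ0.le]
      exact mul_le_of_le_one_right hθ0.le hηn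
    have h2 : (∑ i, |c i|) * ((d * θ) ^ (l + 1) * Real.exp (d * θ)) ≤ C * δ * A := by
      calc (∑ i, |c i|) * ((d * θ) ^ (l + 1) * Real.exp (d * θ))
          ≤ (∑ i, |c i|) * ((d * θ) ^ (l + 1) * Real.exp d) := by
            gcongr; exact mul_le_of_le_one_right hd0.le hθ1
        _ = D * ((∑ i, |c i|) * θ ^ (l + 1)) := by rw [hD]; ring
        _ ≤ D * (m * (m * B) * (θ * A)) := by gcongr
        _ = C * θ * A := by rw [hC]; ring
        _ ≤ C * δ * A := by gcongr
    set F := ∑ i, (c i : ℂ) * wave (θ • w i) η with hF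
    have h3 : ‖P η‖ ≤ ‖F‖ + C * δ * A := by
      have : P η = F - (F - P η) := by ring
      rw [this]
      exact (norm_sub_le _ _).trans (by gcongr; exact h1.trans h2)
    have h4 := sq_re_one_sub_I_mul_le (P η)
    rw [hPa] at h4
    have h5 : ‖P η‖ ^ 2 ≤ (‖F‖ + C * δ * A) ^ 2 := by gcongr
    nlinarith [sq_nonneg (‖F‖ - C * δ * A)]
  have hcF : Continuous fun η : Fin d → ℝ => ‖∑ i, (c i : ℂ) * wave (h • w i) (r • η)‖ ^ 2 :=
    ((continuous_finsetSum _ fun i _ => continuous_const.mul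
      ((continuous_wave (h • w i)).comp (continuous_const_smul r))).norm).pow 2
  have hvol : (volume : Measure (Fin d → ℝ)).real (Set.Icc 0 1) = 1 := by
    rw [Measure.real, Real.volume_Icc_pi]; simp
  have hInt : κ₀ * (A ^ 2 / f ^ 2) ≤
      4 * (∫ η in Set.Icc (0 : Fin d → ℝ) 1, ‖∑ i, (c i : ℂ) * wave (h • w i) (r • η)‖ ^ 2) +
        4 * (C * δ * A) ^ 2 := by
    calc κ₀ * (A ^ 2 / f ^ 2) ≤ κ₀ * a k₀ ^ 2 := by gcongr
      _ ≤ ∫ y in Set.Icc (0 : Fin d → ℝ) 1, polyFun a y ^ 2 := hcoef a k₀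
      _ ≤ ∫ η in Set.Icc (0 : Fin d → ℝ) 1,
          (4 * ‖∑ i, (c i : ℂ) * wave (h • w i) (r • η)‖ ^ 2 + 4 * (C * δ * A) ^ 2) := by
        refine setIntegral_mono_on ?_ ?_ measurableSet_Icc hrem
        · exact ((continuous_polyFun.comp (Continuous.prodMk_right a)).pow
            2).continuousOn.integrableOn_compact isCompact_Icc
        · exact ((continuous_const.mul hcF).add
            continuous_const).continuousOn.integrableOn_compact isCompact_Icc
      _ = _ := by
        rw [integral_add, integral_const_mul, setIntegral_const, hvol, one_smul]
        · exact (continuous_const.mul hcF).continuousOn.integrableOn_compact isCompact_Icc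
        · exact continuous_const.continuousOn.integrableOn_compact isCompact_Icc
  have hlow : κ₀ / (8 * f ^ 2) * A ^ 2 ≤
      ∫ η in Set.Icc (0 : Fin d → ℝ) 1, ‖∑ i, (c i : ℂ) * wave (h • w i) (r • η)‖ ^ 2 := by
    have h1 : (C * δ * A) ^ 2 ≤ κ₀ / (8 * f ^ 2) * A ^ 2 := by rw [mul_pow]; gcongr
    have h2 : κ₀ * (A ^ 2 / f ^ 2) = 8 * (κ₀ / (8 * f ^ 2) * A ^ 2) := by field_simp
    linarith
  have hAk : r ^ l * (h ^ (∑ j, k.1 j) * |moment w c k|) ≤ A := by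
    refine le_trans ?_ (hkA k)
    rw [hθ, mul_pow, ← mul_assoc]
    gcongr ?_ * _
    rw [mul_comm]
    gcongr ?_ * ?_
    exact pow_le_pow_of_le_one hr0.le hr1 (mem_multiIdx.1 k.2)
  calc ρ * (r ^ d * (κ₀ / (8 * f ^ 2))) * (r ^ l) ^ 2 * (h ^ (∑ j, k.1 j) * |moment w c k|) ^ 2
      = ρ * (r ^ d * (κ₀ / (8 * f ^ 2) *
          (r ^ l * (h ^ (∑ j, k.1 j) * |moment w c k|)) ^ 2)) := by ring
    _ ≤ ρ * (r ^ d * (κ₀ / (8 * f ^ 2) * A ^ 2)) := by gcongr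
    _ ≤ ρ * (r ^ d * ∫ η in Set.Icc (0 : Fin d → ℝ) 1,
          ‖∑ i, (c i : ℂ) * wave (h • w i) (r • η)‖ ^ 2) := by gcongr
    _ ≤ _ := le_maternForm_of_cube α hα (fun i => h • w i) c hr0 hr1

lemma pow_mul_bracket_le {α : ℝ} (hα : 0 < α) {d : ℕ} (hd : 1 ≤ d) {y : ℝ} (hy : 0 < y) :
    y ^ (d - 1) * (1 + y ^ 2) ^ (-(α + (d : ℝ) / 2)) ≤ y ^ (-1 - 2 * α) := by
  have hd0 : (0 : ℝ) ≤ d := d.cast_nonneg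
  have h1 : (1 + y ^ 2) ^ (-(α + (d : ℝ) / 2)) ≤ (y ^ 2) ^ (-(α + (d : ℝ) / 2)) :=
    Real.rpow_le_rpow_of_nonpos (by positivity) (by linarith) (by linarith)
  calc y ^ (d - 1) * (1 + y ^ 2) ^ (-(α + (d : ℝ) / 2))
      ≤ y ^ (d - 1) * (y ^ 2) ^ (-(α + (d : ℝ) / 2)) := by gcongr
    _ = y ^ ((d - 1 : ℕ) : ℝ) * y ^ (2 * -(α + (d : ℝ) / 2)) := by
        rw [Real.rpow_natCast, Real.rpow_mul hy.le, Real.rpow_two]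
    _ = y ^ (-1 - 2 * α) := by
        rw [← Real.rpow_add hy, Nat.cast_sub hd]
        congr 1
        push_cast
        ring

/-- One-dimensional radial estimate for the truncated power against the Matérn density. -/
lemma integral_radial_le {α : ℝ} (hα : 0 < α) {d l : ℕ} (hd : 1 ≤ d) (hαl : α ≤ l + 1)
    {h M : ℝ} (hh0 : 0 < h) (hh1 : h ≤ 1)
    (hM : h ^ (2 * (l + 1)) * ∫ y in (1 : ℝ)..1 / h, y ^ ((2 * (l + 1) : ℕ) - 1 - 2 * α : ℝ) ≤
      h ^ (2 * α) * M) :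
    ∫ y in Set.Ioi (0 : ℝ), y ^ (d - 1) *
        (min 1 ((h * y) ^ (2 * (l + 1))) * (1 + y ^ 2) ^ (-(α + (d : ℝ) / 2))) ≤
      h ^ (2 * α) * (1 + M + 1 / (2 * α)) := by
  set g : ℝ → ℝ := fun y => y ^ (d - 1) *
        (min 1 ((h * y) ^ (2 * (l + 1))) * (1 + y ^ 2) ^ (-(α + (d : ℝ) / 2))) with hg
  have hgc : Continuous g := by
    have : Continuous fun y : ℝ => (1 + y ^ 2) ^ (-(α + (d : ℝ) / 2)) :=
      Continuous.rpow_const (by fun_prop) fun y => Or.inl (by positivity)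
    fun_prop
  have hd0 : (0 : ℝ) ≤ d := d.cast_nonneg
  have h1h : 1 ≤ 1 / h := by rw [le_div_iff₀ hh0]; linarith
  have hh2 : h ^ (2 * (l + 1)) ≤ h ^ (2 * α) := by
    rw [← Real.rpow_natCast]
    exact Real.rpow_le_rpow_of_exponent_ge hh0 hh1 (by push_cast; linarith)
  have hb1 : ∀ y ∈ Set.Ioc (0 : ℝ) 1, g y ≤ h ^ (2 * α) := by
    intro y hy
    have e1 : y ^ (d - 1) ≤ 1 := pow_le_one₀ hy.1.le hy.2
    have e2 : min 1 ((h * y) ^ (2 * (l + 1))) ≤ h ^ (2 * α) := by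
      refine (min_le_right _ _).trans (le_trans ?_ hh2)
      have := hy.1
      gcongr
      exact mul_le_of_le_one_right hh0.le hy.2
    have e3 : (1 + y ^ 2) ^ (-(α + (d : ℝ) / 2)) ≤ 1 :=
      Real.rpow_le_one_of_one_le_of_nonpos (by nlinarith [sq_nonneg y]) (by linarith)
    have e4 : 0 ≤ min 1 ((h * y) ^ (2 * (l + 1))) := by have := hy.1; positivity
    calc g y ≤ 1 * (h ^ (2 * α) * 1) := by
          simp only [hg]; have := hy.1; gcongr
      _ = _ := by ring
  have hb3 : ∀ y ∈ Set.Ioi (1 / h), g y ≤ y ^ (-1 - 2 * α) := by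
    intro y hy
    have hy0 : 0 < y := (by positivity : 0 < 1 / h).trans hy
    refine le_trans ?_ (pow_mul_bracket_le hα hd hy0)
    simp only [hg]
    gcongr
    exact mul_le_of_le_one_left (by positivity) (min_le_left _ _)
  have hb2 : ∀ y ∈ Set.Ioc 1 (1 / h),
      g y ≤ h ^ (2 * (l + 1)) * y ^ ((2 * (l + 1) : ℕ) - 1 - 2 * α : ℝ) := by
    intro y hy
    have hy0 : 0 < y := zero_lt_one.trans hy.1
    calc g y ≤ y ^ (d - 1) * ((h * y) ^ (2 * (l + 1)) * (1 + y ^ 2) ^ (-(α + (d : ℝ) / 2))) := by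
          simp only [hg]; gcongr; exact min_le_right _ _
      _ = (h * y) ^ (2 * (l + 1)) * (y ^ (d - 1) * (1 + y ^ 2) ^ (-(α + (d : ℝ) / 2))) := by ring
      _ ≤ (h * y) ^ (2 * (l + 1)) * y ^ (-1 - 2 * α) := by
          gcongr; exact pow_mul_bracket_le hα hd hy0
      _ = h ^ (2 * (l + 1)) * (y ^ ((2 * (l + 1) : ℕ) : ℝ) * y ^ (-1 - 2 * α)) := by
          rw [mul_pow, Real.rpow_natCast]; ring
      _ = _ := by
          rw [← Real.rpow_add hy0]
          congr 2
          ring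
  have hgnn : ∀ y ∈ Set.Ioi (1 / h), 0 ≤ g y := by
    intro y hy
    have hy0 : 0 < y := (by positivity : 0 < 1 / h).trans hy
    simp only [hg]
    positivity
  have hInt3 : IntegrableOn (fun y : ℝ => y ^ (-1 - 2 * α)) (Set.Ioi (1 / h)) :=
    integrableOn_Ioi_rpow_of_lt (by linarith) (by positivity)
  have hg3 : IntegrableOn g (Set.Ioi (1 / h)) := by
    refine Integrable.mono' hInt3 hgc.aestronglyMeasurable ?_
    refine (ae_restrict_iff' measurableSet_Ioi).2 (Filter.Eventually.of_forall fun y hy => ?_)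
    rw [Real.norm_of_nonneg (hgnn y hy)]
    exact hb3 y hy
  have hg1 : IntegrableOn g (Set.Ioc 0 1) := hgc.integrableOn_Ioc
  have hg2 : IntegrableOn g (Set.Ioc 1 (1 / h)) := hgc.integrableOn_Ioc
  have hg23 : IntegrableOn g (Set.Ioi 1) := by
    rw [← Set.Ioc_union_Ioi_eq_Ioi h1h]; exact hg2.union hg3
  have hsplit : ∫ y in Set.Ioi (0 : ℝ), g y = (∫ y in Set.Ioc 0 1, g y) +
      ((∫ y in Set.Ioc 1 (1 / h), g y) + ∫ y in Set.Ioi (1 / h), g y) := by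
    rw [← Set.Ioc_union_Ioi_eq_Ioi zero_le_one,
      setIntegral_union (Set.Ioc_disjoint_Ioi le_rfl) measurableSet_Ioi hg1 hg23]
    congr 1
    rw [← Set.Ioc_union_Ioi_eq_Ioi h1h,
      setIntegral_union (Set.Ioc_disjoint_Ioi le_rfl) measurableSet_Ioi hg2 hg3]
  have hi1 : ∫ y in Set.Ioc 0 1, g y ≤ h ^ (2 * α) := by
    have := setIntegral_mono_on hg1 (integrableOn_const (by simp)) measurableSet_Ioc hb1
    simpa using this
  have hi2 : ∫ y in Set.Ioc 1 (1 / h), g y ≤ h ^ (2 * α) * M := by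
    refine le_trans ?_ hM
    rw [intervalIntegral.integral_of_le h1h, ← integral_const_mul]
    refine setIntegral_mono_on hg2 ?_ measurableSet_Ioc hb2
    refine IntegrableOn.mono_set (ContinuousOn.integrableOn_compact (isCompact_Icc (a := 1)
      (b := 1 / h)) ?_) Set.Ioc_subset_Icc_self
    refine continuousOn_const.mul (ContinuousOn.rpow_const continuousOn_id fun y hy => Or.inl ?_)
    exact (zero_lt_one.trans_le hy.1).ne'
  have hi3 : ∫ y in Set.Ioi (1 / h), g y ≤ h ^ (2 * α) * (1 / (2 * α)) := by
    refine (setIntegral_mono_on hg3 hInt3 measurableSet_Ioi hb3).trans_eq ?_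
    rw [integral_Ioi_rpow_of_lt (by linarith) (by positivity), one_div, Real.inv_rpow hh0.le,
      ← Real.rpow_neg hh0.le, show -(-1 - 2 * α + 1) = 2 * α by ring]
    rw [show -1 - 2 * α + 1 = -(2 * α) by ring]
    field_simp
  rw [hsplit]
  linarith

lemma middle_integral_le_of_lt {α : ℝ} {l : ℕ} (hαl : α < l + 1) {h : ℝ}
    (hh0 : 0 < h) :
    h ^ (2 * (l + 1)) * ∫ y in (1 : ℝ)..1 / h, y ^ ((2 * (l + 1) : ℕ) - 1 - 2 * α : ℝ) ≤
      h ^ (2 * α) * (1 / (2 * (l + 1 - α))) := by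
  have hg : 0 < l + 1 - α := by linarith
  rw [integral_rpow (Or.inl (by push_cast; linarith)), Real.one_rpow, one_div, Real.inv_rpow hh0.le,
    ← Real.rpow_neg hh0.le]
  have e : ((2 * (l + 1) : ℕ) - 1 - 2 * α + 1 : ℝ) = 2 * (l + 1 - α) := by push_cast; ring
  rw [e, mul_div_assoc', mul_one_div]
  gcongr
  rw [mul_sub, ← Real.rpow_natCast, ← Real.rpow_add hh0]
  have e' : ((2 * (l + 1) : ℕ) : ℝ) + -(2 * (l + 1 - α)) = 2 * α := by push_cast; ring
  rw [e']
  have : 0 < h ^ ((2 * (l + 1) : ℕ) : ℝ) := by positivity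
  linarith

lemma middle_integral_eq_of_eq {α : ℝ} {l : ℕ} (hαl : α = l + 1) {h : ℝ}
    (hh0 : 0 < h) :
    h ^ (2 * (l + 1)) * ∫ y in (1 : ℝ)..1 / h, y ^ ((2 * (l + 1) : ℕ) - 1 - 2 * α : ℝ) =
      h ^ (2 * α) * Real.log (1 / h) := by
  have e : ((2 * (l + 1) : ℕ) - 1 - 2 * α : ℝ) = -1 := by rw [hαl]; push_cast; ring
  rw [e, ← Real.rpow_natCast]
  congr 2
  · rw [hαl]; push_cast; ring
  · simp_rw [Real.rpow_neg_one]
    rw [integral_inv_of_pos one_pos (by positivity), div_one]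

/-- Energy bound for coefficients annihilating polynomials of degree at most `l`. -/
lemma exists_maternForm_le (α : ℝ) (hα : 0 < α) (d l : ℕ) (hd : 1 ≤ d) (hαl : α ≤ l + 1) :
    ∃ C : ℝ, 0 < C ∧ ∀ (n : ℕ) (y : Option (Fin n) → Fin d → ℝ) (b : Option (Fin n) → ℝ),
      (∀ i, y i ∈ Set.Icc (0 : Fin d → ℝ) 1) → (∀ k : multiIdx d l, moment y b k = 0) →
      ∀ h M : ℝ, 0 < h → h ≤ 1 → 0 ≤ M →
      h ^ (2 * (l + 1)) * (∫ y in (1 : ℝ)..1 / h, y ^ ((2 * (l + 1) : ℕ) - 1 - 2 * α : ℝ)) ≤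
        h ^ (2 * α) * M →
      maternForm α d (fun i => h • y i) b ≤
        C * (∑ i, |b i|) ^ 2 * (h ^ (2 * α) * (1 + M)) := by
  have hd0 : (1 : ℝ) ≤ d := by exact_mod_cast hd
  have : Nonempty (Fin d) := ⟨⟨0, hd⟩⟩
  set D : ℝ := (d : ℝ) ^ (l + 1) * Real.exp d with hD
  have hD1 : 1 ≤ D := one_le_mul_of_one_le_of_one_le (one_le_pow₀ hd0)
    (Real.one_le_exp (by linarith))
  set v : ℝ := (volume : Measure (Fin d → ℝ)).real (Metric.ball 0 1) with hv
  have hv0 : 0 < v := by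
    rw [hv, Measure.real, ENNReal.toReal_pos_iff]
    exact ⟨Metric.measure_ball_pos _ _ one_pos, measure_ball_lt_top⟩
  refine ⟨D ^ 2 * (d * (v * (1 + 1 / (2 * α)))), by positivity, ?_⟩
  intro n y b hy hmom h M hh0 hh1 hM0 hM
  set S := ∑ i, |b i| with hS
  have hS0 : 0 ≤ S := Finset.sum_nonneg fun i _ => abs_nonneg _
  have hpt : ∀ ξ, ‖∑ i, (b i : ℂ) * wave (h • y i) ξ‖ ^ 2 ≤
      (D * S) ^ 2 * min 1 ((h * ‖ξ‖) ^ (2 * (l + 1))) := by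
    intro ξ
    by_cases hξ : h * ‖ξ‖ ≤ 1
    · have h1 := norm_sum_wave_sub_le l (fun i => h • y i) b ξ (d * (h * ‖ξ‖)) fun i => by
        have : ∑ t, (h • y i) t * ξ t = ∑ t, y i t * (h • ξ) t :=
          Finset.sum_congr rfl fun t _ => by simp; ring
        rw [this]
        refine abs_sum_mul_le (hy i) ?_
        rw [norm_smul, Real.norm_of_nonneg hh0.le]
      have h0 : ∀ k : multiIdx d l, moment (fun i => h • y i) b k = 0 := fun k => by
        rw [moment_smul, hmom k, mul_zero]
      simp only [h0, mul_zero, Complex.ofReal_zero, zero_mul, Finset.sum_const_zero,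
        sub_zero] at h1
      have h2 : ‖∑ i, (b i : ℂ) * wave (h • y i) ξ‖ ≤ D * S * (h * ‖ξ‖) ^ (l + 1) := by
        refine h1.trans ?_
        calc S * ((d * (h * ‖ξ‖)) ^ (l + 1) * Real.exp (d * (h * ‖ξ‖)))
            ≤ S * ((d * (h * ‖ξ‖)) ^ (l + 1) * Real.exp d) := by
              gcongr; exact mul_le_of_le_one_right (by linarith) hξ
          _ = _ := by rw [hD]; ring
      rw [min_eq_right (pow_le_one₀ (by positivity) hξ), mul_comm 2 (l + 1), pow_mul, ← mul_pow]
      gcongr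
    · rw [min_eq_left (one_le_pow₀ (not_le.1 hξ).le), mul_one]
      gcongr
      refine (norm_sum_wave_le _ b ξ).trans ?_
      exact le_mul_of_one_le_left hS0 hD1
  set G : (Fin d → ℝ) → ℝ := fun ξ =>
    min 1 ((h * ‖ξ‖) ^ (2 * (l + 1))) * (1 + ‖ξ‖ ^ 2) ^ (-(α + (d : ℝ) / 2)) with hG
  have hGint : Integrable G := by
    refine (integrable_norm_bracket α hα d).bdd_mul (c := 1)
      (Continuous.aestronglyMeasurable (by fun_prop)) (Filter.Eventually.of_forall fun ξ => ?_)
    rw [Real.norm_of_nonneg (by positivity)]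
    exact min_le_left _ _
  have hrad : ∫ ξ, G ξ ≤ d * (v * (h ^ (2 * α) * (1 + M + 1 / (2 * α)))) := by
    have := integral_fun_norm_addHaar (volume : Measure (Fin d → ℝ)) fun y : ℝ =>
      min 1 ((h * y) ^ (2 * (l + 1))) * (1 + y ^ 2) ^ (-(α + (d : ℝ) / 2))
    simp only [Module.finrank_fintype_fun_eq_card, Fintype.card_fin, smul_eq_mul,
      nsmul_eq_mul] at this
    rw [this]
    gcongr
    exact integral_radial_le hα hd hαl hh0 hh1 hM
  calc maternForm α d (fun i => h • y i) b
      ≤ ∫ ξ, (D * S) ^ 2 * G ξ := by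
        rw [maternForm_eq_integral α hα]
        refine integral_mono (integrable_norm_sq_sum_wave α hα _ b) (hGint.const_mul _) fun ξ => ?_
        simp only [hG]
        rw [← mul_assoc]
        have := (maternDensity_pos α ξ).le
        gcongr
        · exact hpt ξ
        · exact maternDensity_le α hα ξ
    _ ≤ (D * S) ^ 2 * (d * (v * (h ^ (2 * α) * (1 + M + 1 / (2 * α))))) := by
        rw [integral_const_mul]; gcongr
    _ ≤ (D * S) ^ 2 * (d * (v * (h ^ (2 * α) * ((1 + 1 / (2 * α)) * (1 + M))))) := by
        gcongr
        have : 0 ≤ 1 / (2 * α) * M := by positivity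
        linarith
    _ = _ := by ring

/-- Decay of the Matérn function at infinity. -/
lemma exists_matern_le (α : ℝ) (hα : 0 < α) (d : ℕ) (ε : ℝ) (hε : 0 < ε) :
    ∃ R : ℝ, 0 < R ∧ ∀ y : Fin d → ℝ, R ≤ ‖y‖ → |matern α d y| ≤ ε := by
  have hRL := tendsto_integral_exp_smul_cocompact
    (fun ξ : Fin d → ℝ => (maternDensity α d ξ : ℂ)) (volume : Measure (Fin d → ℝ))
  set T : (Fin d → ℝ) →ₗ[ℝ] StrongDual ℝ (Fin d → ℝ) :=
    { toFun := fun y => ∑ t, y t • ContinuousLinearMap.proj t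
      map_add' := fun y z => by simp [add_smul, Finset.sum_add_distrib]
      map_smul' := fun r y => by simp [Finset.smul_sum, smul_smul] } with hT
  have hTa : ∀ y ξ, T y ξ = ∑ t, y t * ξ t := fun y ξ => by simp [hT]
  have hker : LinearMap.ker T = ⊥ := by
    rw [LinearMap.ker_eq_bot']
    intro y hy
    ext t
    have := hTa y (Pi.single t 1)
    rw [hy] at this
    simpa [Pi.single_apply] using this.symm
  have hTc : Filter.Tendsto T (Filter.cocompact _) (Filter.cocompact _) :=
    (LinearMap.isClosedEmbedding_of_injective hker).tendsto_cocompact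
  have h2 := hRL.comp hTc
  have h3 := (Metric.tendsto_nhds.1 h2 ε hε)
  rw [← Metric.cobounded_eq_cocompact] at h3
  obtain ⟨R, -, hR⟩ := (Metric.hasBasis_cobounded_compl_closedBall (0 : Fin d → ℝ)).eventually_iff.1
    h3
  refine ⟨2 * Real.pi * (|R| + 1), by positivity, fun y hy => ?_⟩
  have hmem : (2 * Real.pi)⁻¹ • y ∈ (Metric.closedBall (0 : Fin d → ℝ) R)ᶜ := by
    simp only [Set.mem_compl_iff, Metric.mem_closedBall, dist_zero_right, norm_smul, not_le]
    rw [Real.norm_of_nonneg (by positivity)]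
    have : |R| + 1 ≤ (2 * Real.pi)⁻¹ * ‖y‖ := by
      rw [inv_mul_eq_div, le_div_iff₀ (by positivity)]; linarith
    linarith [le_abs_self R]
  have h4 := hR hmem
  simp only [Function.comp, dist_zero_right] at h4
  refine le_trans ?_ h4.le
  have hInt : Integrable fun ξ : Fin d → ℝ =>
      Real.fourierChar (-(T ((2 * Real.pi)⁻¹ • y) ξ)) • (maternDensity α d ξ : ℂ) := by
    refine ((integrable_maternDensity α hα d).ofReal (𝕜 := ℂ)).mono ?_ ?_
    · refine Continuous.aestronglyMeasurable ?_
      have := Complex.continuous_ofReal.comp (continuous_maternDensity α d)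
      fun_prop
    · exact Filter.Eventually.of_forall fun ξ => by simp
  have hre : matern α d y =
      (∫ ξ, Real.fourierChar (-(T ((2 * Real.pi)⁻¹ • y) ξ)) • (maternDensity α d ξ : ℂ)).re := by
    have := integral_re hInt
    simp only [RCLike.re_to_complex] at this
    rw [← this]
    refine integral_congr_ae (Filter.Eventually.of_forall fun ξ => ?_)
    change Real.cos _ * maternDensity α d ξ = _
    simp only [Circle.smul_def, Real.fourierChar_apply, smul_eq_mul, Complex.re_mul_ofReal,
      Complex.exp_ofReal_mul_I_re]
    congr 1
    rw [mul_neg, Real.cos_neg, map_smul]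
    congr 1
    change _ = 2 * Real.pi * ((2 * Real.pi)⁻¹ * T y ξ)
    rw [hTa]
    field_simp
  rw [hre]
  exact Complex.abs_re_le_norm _

/-- The iterated partial derivative along a word of coordinate directions. -/
def wder {d : ℕ} (W : List (Fin d)) (f : (Fin d → ℝ) → ℝ) : (Fin d → ℝ) → ℝ :=
  W.foldr (pder d) f

lemma wder_cons {d : ℕ} (j : Fin d) (W : List (Fin d)) (f : (Fin d → ℝ) → ℝ) :
    wder (j :: W) f = pder d j (wder W f) := rfl

lemma wder_append {d : ℕ} (W W' : List (Fin d)) (f : (Fin d → ℝ) → ℝ) :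
    wder (W ++ W') f = wder W (wder W' f) := by
  simp [wder, List.foldr_append]

lemma wder_replicate {d : ℕ} (n : ℕ) (j : Fin d) (f : (Fin d → ℝ) → ℝ) :
    wder (List.replicate n j) f = (pder d j)^[n] f := by
  induction n with
  | zero => rfl
  | succ n ih => rw [List.replicate_succ, wder_cons, ih, Function.iterate_succ_apply']

lemma contDiff_pder {d n : ℕ} {f : (Fin d → ℝ) → ℝ} (hf : ContDiff ℝ (n + 1 : ℕ) f) (j : Fin d) :
    ContDiff ℝ n (pder d j f) :=
  (hf.fderiv_right (m := n) (by norm_cast)).clm_apply contDiff_const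

lemma contDiff_wder {d : ℕ} (W : List (Fin d)) {f : (Fin d → ℝ) → ℝ} :
    ∀ {n : ℕ}, ContDiff ℝ (n + W.length : ℕ) f → ContDiff ℝ n (wder W f) := by
  induction W with
  | nil => intro n hf; exact hf
  | cons j W ih =>
    intro n hf
    rw [wder_cons]
    refine contDiff_pder (ih ?_) j
    rwa [List.length_cons, ← Nat.add_assoc, Nat.add_right_comm] at hf

lemma pder_comm {d : ℕ} {f : (Fin d → ℝ) → ℝ} (hf : ContDiff ℝ (2 : ℕ) f) (i j : Fin d) :
    pder d i (pder d j f) = pder d j (pder d i f) := by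
  have key (i j : Fin d) (x : Fin d → ℝ) : pder d i (pder d j f) x =
      fderiv ℝ (fderiv ℝ f) x (Pi.single i 1) (Pi.single j 1) := by
    have hd : DifferentiableAt ℝ (fderiv ℝ f) x :=
      ((hf.fderiv_right (m := 1) (by norm_cast)).differentiable one_ne_zero) x
    have := (hd.hasFDerivAt.clm_apply (hasFDerivAt_const (Pi.single j (1 : ℝ)) x)).fderiv
    unfold pder
    rw [this]
    simp
  funext x
  rw [key, key]
  exact (hf.contDiffAt.isSymmSndFDerivAt (by simp)) _ _

lemma wder_perm {d : ℕ} {W W' : List (Fin d)} (h : W.Perm W') {f : (Fin d → ℝ) → ℝ} :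
    ContDiff ℝ W.length f → wder W f = wder W' f := by
  induction h with
  | nil => intro _; rfl
  | cons j _ ih =>
    intro hf
    rw [wder_cons, wder_cons, ih (hf.of_le (by simp))]
  | swap i j W =>
    intro hf
    simp only [wder_cons]
    refine pder_comm (contDiff_wder W ?_) _ _
    convert hf using 2
    simp; ring
  | trans h₁ _ ih₁ ih₂ =>
    intro hf
    rw [ih₁ hf, ih₂ (h₁.length_eq ▸ hf)]

lemma mder_eq_wder {d : ℕ} (k : Fin d → ℕ) (f : (Fin d → ℝ) → ℝ) :
    mder d k f = wder ((List.finRange d).flatMap fun j => List.replicate (k j) j) f := by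
  unfold mder
  induction List.finRange d with
  | nil => rfl
  | cons j W ih =>
    rw [List.foldr_cons, ih, List.flatMap_cons, wder_append, wder_replicate]

lemma wder_eq_mder {d : ℕ} (W : List (Fin d)) {f : (Fin d → ℝ) → ℝ} (hf : ContDiff ℝ W.length f) :
    wder W f = mder d (fun j => W.count j) f := by
  rw [mder_eq_wder]
  refine wder_perm (List.perm_iff_count.2 fun j => ?_) hf
  rw [List.count_flatMap]
  have : (List.count j ∘ fun i => List.replicate (W.count i) i) =
      fun i => if i = j then W.count j else 0 := by
    funext i
    simp only [Function.comp, List.count_replicate, beq_iff_eq]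
    split_ifs with h <;> simp [h]
  rw [this, ← List.ofFn_eq_map, List.sum_ofFn]
  simp

lemma sum_count_eq_length {d : ℕ} (W : List (Fin d)) : ∑ j, W.count j = W.length := by
  simpa using Multiset.sum_count_eq_card (s := Finset.univ) (m := (W : Multiset (Fin d)))
    (by simp)

lemma HolderBall.abs_wder_le {d : ℕ} {β : ℝ} {f : (Fin d → ℝ) → ℝ} (hf : HolderBall d β f)
    (W : List (Fin d)) (hW : W.length ≤ lbelow β) (x : Fin d → ℝ) : |wder W f x| ≤ 1 := by
  have h1 : ContDiff ℝ (lbelow β : ℕ) f := hf.1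
  rw [wder_eq_mder W (h1.of_le (by exact_mod_cast hW))]
  exact hf.2.1 _ (by rw [sum_count_eq_length]; exact hW) x

lemma HolderBall.abs_wder_sub_le {d : ℕ} {β : ℝ} {f : (Fin d → ℝ) → ℝ} (hf : HolderBall d β f)
    (W : List (Fin d)) (hW : W.length = lbelow β) (x y : Fin d → ℝ) :
    |wder W f x - wder W f y| ≤ nrm (x - y) ^ (β - (lbelow β : ℝ)) := by
  have h1 : ContDiff ℝ (lbelow β : ℕ) f := hf.1
  rw [wder_eq_mder W (h1.of_le (by exact_mod_cast hW.le))]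
  exact hf.2.2 _ (by rw [sum_count_eq_length]; exact hW) x y

/-- The `n`-th directional derivative in direction `v`, expanded over words of length `n`. -/
def dirDeriv {d : ℕ} (n : ℕ) (f : (Fin d → ℝ) → ℝ) (z v : Fin d → ℝ) : ℝ :=
  ∑ W : Fin n → Fin d, (∏ i, v (W i)) * wder (List.ofFn W) f z

lemma fderiv_apply_eq_sum_pder {d : ℕ} (f : (Fin d → ℝ) → ℝ) (z v : Fin d → ℝ) :
    fderiv ℝ f z v = ∑ j, v j * pder d j f z := by
  conv_lhs => rw [pi_eq_sum_univ' v]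
  simp only [map_sum, map_smul, smul_eq_mul, pder]

lemma iteratedDeriv_line {d : ℕ} {f : (Fin d → ℝ) → ℝ} (z v : Fin d → ℝ) (n : ℕ) :
    ContDiff ℝ n f → iteratedDeriv n (fun t : ℝ => f (z + t • v)) =
      fun t => dirDeriv n f (z + t • v) v := by
  induction n with
  | zero => intro _; funext t; simp [dirDeriv, wder]
  | succ n ih =>
    intro hf
    rw [iteratedDeriv_succ, ih (hf.of_le (by norm_cast; omega))]
    funext t
    have hW (W : Fin n → Fin d) : HasDerivAt (fun t : ℝ => wder (List.ofFn W) f (z + t • v))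
        (∑ j, v j * wder (j :: List.ofFn W) f (z + t • v)) t := by
      have h1 : ContDiff ℝ (1 : ℕ) (wder (List.ofFn W) f) := by
        refine contDiff_wder _ ?_
        rw [List.length_ofFn, Nat.add_comm]; exact hf
      have h2 := ((h1.differentiable (by simp)) (z + t • v)).hasFDerivAt
      have h3 : HasDerivAt (fun t : ℝ => z + t • v) v t := by
        simpa using ((hasDerivAt_id t).smul_const v).const_add z
      have := h2.comp_hasDerivAt t h3
      rwa [fderiv_apply_eq_sum_pder] at this
    have := (HasDerivAt.fun_sum (u := Finset.univ) fun W _ =>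
      (hW W).const_mul (∏ i, v (W i))).deriv
    unfold dirDeriv
    rw [this, ← (Fin.consEquiv fun _ => Fin d).sum_comp, Fintype.sum_prod_type, Finset.sum_comm]
    refine Finset.sum_congr rfl fun W _ => ?_
    rw [Finset.mul_sum]
    refine Finset.sum_congr rfl fun j _ => ?_
    simp only [Fin.consEquiv_apply, Fin.prod_univ_succ, Fin.cons_zero, Fin.cons_succ,
      List.ofFn_succ]
    ring

/-- The Taylor polynomial of degree `n` at `z`, evaluated at `z + v`. -/
def taylorSum {d : ℕ} (n : ℕ) (f : (Fin d → ℝ) → ℝ) (z v : Fin d → ℝ) : ℝ :=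
  ∑ q ∈ Finset.range (n + 1), (q.factorial : ℝ)⁻¹ * dirDeriv q f z v

lemma nrm_le {d : ℕ} (v : Fin d → ℝ) : nrm v ≤ d * ‖v‖ := by
  unfold nrm
  rw [Real.sqrt_le_left (by positivity)]
  calc ∑ j, v j ^ 2 ≤ ∑ _j : Fin d, ‖v‖ ^ 2 := by
        refine Finset.sum_le_sum fun j _ => ?_
        rw [← sq_abs]
        exact pow_le_pow_left₀ (abs_nonneg _) (norm_le_pi_norm v j) 2
    _ = d * ‖v‖ ^ 2 := by simp
    _ ≤ (d * ‖v‖) ^ 2 := by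
        rw [mul_pow]
        refine mul_le_mul_of_nonneg_right ?_ (by positivity)
        exact_mod_cast Nat.le_self_pow two_ne_zero d

lemma nrm_nonneg {d : ℕ} (v : Fin d → ℝ) : 0 ≤ nrm v := Real.sqrt_nonneg _

lemma nrm_smul {d : ℕ} (t : ℝ) (v : Fin d → ℝ) : nrm (t • v) = |t| * nrm v := by
  unfold nrm
  simp only [Pi.smul_apply, smul_eq_mul, mul_pow, ← Finset.mul_sum]
  rw [Real.sqrt_mul (sq_nonneg _), Real.sqrt_sq_eq_abs]

lemma HolderBall.abs_dirDeriv_sub_le {d : ℕ} {β : ℝ} (hβ : lbelow β ≤ β) {f : (Fin d → ℝ) → ℝ}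
    (hf : HolderBall d β f) (z v : Fin d → ℝ) {t : ℝ} (ht : |t| ≤ 1) :
    |dirDeriv (lbelow β) f (z + t • v) v - dirDeriv (lbelow β) f z v| ≤
      d ^ lbelow β * ‖v‖ ^ lbelow β * nrm v ^ (β - (lbelow β : ℝ)) := by
  unfold dirDeriv
  rw [← Finset.sum_sub_distrib]
  refine (Finset.abs_sum_le_sum_abs _ _).trans ?_
  have hW (W : Fin (lbelow β) → Fin d) :
      |(∏ i, v (W i)) * wder (List.ofFn W) f (z + t • v) -
        (∏ i, v (W i)) * wder (List.ofFn W) f z| ≤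
      ‖v‖ ^ lbelow β * nrm v ^ (β - (lbelow β : ℝ)) := by
    rw [← mul_sub, abs_mul, Finset.abs_prod]
    refine mul_le_mul ?_ ?_ (abs_nonneg _) (by positivity)
    · calc ∏ i, |v (W i)| ≤ ∏ _i : Fin (lbelow β), ‖v‖ :=
            Finset.prod_le_prod (fun _ _ => abs_nonneg _) fun i _ => norm_le_pi_norm v (W i)
        _ = _ := by simp
    · refine (hf.abs_wder_sub_le _ (by simp) _ _).trans ?_
      refine Real.rpow_le_rpow (nrm_nonneg _) ?_ (by linarith)
      rw [add_sub_cancel_left, nrm_smul]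
      exact mul_le_of_le_one_left (nrm_nonneg _) ht
  refine (Finset.sum_le_sum fun W _ => hW W).trans ?_
  simp [mul_assoc]

lemma HolderBall.abs_sub_taylorSum_le {d : ℕ} {β : ℝ} (hβ : lbelow β ≤ β) (hβ0 : 0 < β)
    {f : (Fin d → ℝ) → ℝ} (hf : HolderBall d β f) (z v : Fin d → ℝ) :
    |f (z + v) - taylorSum (lbelow β) f z v| ≤
      d ^ lbelow β * d ^ (β - (lbelow β : ℝ)) * ‖v‖ ^ β := by
  have hpow : (d : ℝ) ^ lbelow β * ‖v‖ ^ lbelow β * nrm v ^ (β - (lbelow β : ℝ)) ≤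
      d ^ lbelow β * d ^ (β - (lbelow β : ℝ)) * ‖v‖ ^ β := by
    have h1 : nrm v ^ (β - (lbelow β : ℝ)) ≤ d ^ (β - (lbelow β : ℝ)) *
        ‖v‖ ^ (β - (lbelow β : ℝ)) := by
      rw [← Real.mul_rpow (by positivity) (by positivity)]
      exact Real.rpow_le_rpow (nrm_nonneg _) (nrm_le v) (by linarith)
    have h2 : ‖v‖ ^ lbelow β * ‖v‖ ^ (β - (lbelow β : ℝ)) = ‖v‖ ^ β := by
      rw [← Real.rpow_natCast, ← Real.rpow_add' (norm_nonneg _) (by simpa using hβ0.ne')]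
      congr 1; ring
    calc _ ≤ (d : ℝ) ^ lbelow β * ‖v‖ ^ lbelow β * (d ^ (β - (lbelow β : ℝ)) *
        ‖v‖ ^ (β - (lbelow β : ℝ))) := by gcongr
      _ = d ^ lbelow β * d ^ (β - (lbelow β : ℝ)) *
        (‖v‖ ^ lbelow β * ‖v‖ ^ (β - (lbelow β : ℝ))) := by ring
      _ = _ := by rw [h2]
  have hcd : ContDiff ℝ (lbelow β : ℕ) f := hf.1
  suffices h : ∃ t : ℝ, |t| ≤ 1 ∧ f (z + v) - taylorSum (lbelow β) f z v =
      ((lbelow β).factorial : ℝ)⁻¹ *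
        (dirDeriv (lbelow β) f (z + t • v) v - dirDeriv (lbelow β) f z v) by
    obtain ⟨t, ht, he⟩ := h
    rw [he, abs_mul, abs_of_nonneg (by positivity : (0 : ℝ) ≤ ((lbelow β).factorial : ℝ)⁻¹)]
    refine (mul_le_of_le_one_left (abs_nonneg _) ?_).trans
      ((hf.abs_dirDeriv_sub_le hβ z v ht).trans hpow)
    exact inv_le_one_of_one_le₀ (by exact_mod_cast Nat.one_le_iff_ne_zero.2 (Nat.factorial_ne_zero _))
  generalize lbelow β = N at hcd
  rcases N with _ | n
  · exact ⟨1, by simp, by simp [taylorSum, dirDeriv, wder]⟩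
  · have hline : ContDiff ℝ (n + 1 : ℕ) fun t : ℝ => f (z + t • v) := by
      refine hcd.comp ?_
      fun_prop
    obtain ⟨t, ht, he⟩ := taylor_mean_remainder_lagrange_iteratedDeriv (n := n)
      (f := fun t : ℝ => f (z + t • v)) (x₀ := 0) (x := 1) zero_ne_one
      (by exact_mod_cast hline.contDiffOn)
    rw [Set.uIoo_of_le zero_le_one] at ht
    refine ⟨t, by rw [abs_of_pos ht.1]; exact ht.2.le, ?_⟩
    rw [iteratedDeriv_line z v (n + 1) hcd, taylor_within_apply, Set.uIcc_of_le zero_le_one] at he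
    have hT : ∑ k ∈ Finset.range (n + 1), ((k.factorial : ℝ)⁻¹ * (1 - 0) ^ k) •
        iteratedDerivWithin k (fun t : ℝ => f (z + t • v)) (Set.Icc 0 1) 0 =
        ∑ k ∈ Finset.range (n + 1), (k.factorial : ℝ)⁻¹ * dirDeriv k f z v := by
      refine Finset.sum_congr rfl fun k hk => ?_
      have hk' : k ≤ n + 1 := by have := Finset.mem_range.1 hk; omega
      rw [iteratedDerivWithin_eq_iteratedDeriv (uniqueDiffOn_Icc zero_lt_one)
        (hline.of_le (by exact_mod_cast hk')).contDiffAt (by simp),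
        iteratedDeriv_line z v k (hcd.of_le (by exact_mod_cast hk'))]
      simp
    rw [hT] at he
    unfold taylorSum
    rw [Finset.sum_range_succ]
    simp only [one_smul, sub_zero, one_pow, mul_one] at he
    rw [← sub_sub, he]
    ring

/-- The multi-index counting the letters of a word. -/
def wordIdx {d n : ℕ} (W : Fin n → Fin d) (j : Fin d) : ℕ :=
  (Finset.univ.filter fun i => W i = j).card

lemma prod_word_eq_monom {d n : ℕ} (W : Fin n → Fin d) (y : Fin d → ℝ) :
    ∏ i, y (W i) = monom y (wordIdx W) := by
  unfold monom wordIdx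
  rw [← Finset.prod_fiberwise Finset.univ W]
  refine Finset.prod_congr rfl fun j _ => ?_
  rw [Finset.prod_congr rfl (g := fun _ => y j)
    (fun i hi => by rw [(Finset.mem_filter.1 hi).2]), Finset.prod_const]

lemma sum_wordIdx {d n : ℕ} (W : Fin n → Fin d) : ∑ j, wordIdx W j = n := by
  unfold wordIdx
  rw [← Finset.card_eq_sum_card_fiberwise (fun _ _ => Finset.mem_coe.2 (Finset.mem_univ _))]
  simp

/-- A linear combination of Taylor sums is a combination of moments. -/
lemma sum_mul_taylorSum {ι : Type*} [Fintype ι] {d : ℕ} (N : ℕ) (f : (Fin d → ℝ) → ℝ)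
    (z : Fin d → ℝ) (s : ℝ) (y : ι → Fin d → ℝ) (c : ι → ℝ) :
    ∑ i, c i * taylorSum N f z (s • y i) =
      ∑ q ∈ Finset.range (N + 1), (q.factorial : ℝ)⁻¹ *
        ∑ W : Fin q → Fin d, s ^ q * moment y c (wordIdx W) * wder (List.ofFn W) f z := by
  unfold taylorSum dirDeriv moment
  simp_rw [Finset.mul_sum, Finset.sum_mul]
  rw [Finset.sum_comm]
  refine Finset.sum_congr rfl fun q _ => ?_
  rw [Finset.sum_comm]
  refine Finset.sum_congr rfl fun W _ => ?_
  rw [Finset.mul_sum]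
  refine Finset.sum_congr rfl fun i _ => ?_
  simp only [Pi.smul_apply, smul_eq_mul, Finset.prod_mul_distrib, prod_word_eq_monom,
    Finset.prod_const, Finset.card_univ, Fintype.card_fin]
  ring

lemma HolderBall.abs_sum_mul_taylorSum_le {ι : Type*} [Fintype ι] {d : ℕ} {β : ℝ}
    {f : (Fin d → ℝ) → ℝ} (hf : HolderBall d β f) (z : Fin d → ℝ) {s : ℝ} (hs : 0 ≤ s)
    (y : ι → Fin d → ℝ) (c : ι → ℝ) {D : ℝ}
    (hD : ∀ k : Fin d → ℕ, ∑ j, k j ≤ lbelow β → s ^ (∑ j, k j) * |moment y c k| ≤ D) :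
    |∑ i, c i * taylorSum (lbelow β) f z (s • y i)| ≤
      (∑ q ∈ Finset.range (lbelow β + 1), (d : ℝ) ^ q) * D := by
  rw [sum_mul_taylorSum, Finset.sum_mul]
  refine (Finset.abs_sum_le_sum_abs _ _).trans (Finset.sum_le_sum fun q hq => ?_)
  have hq' : q ≤ lbelow β := by have := Finset.mem_range.1 hq; omega
  rw [abs_mul, abs_of_nonneg (by positivity : (0 : ℝ) ≤ (q.factorial : ℝ)⁻¹)]
  refine (mul_le_of_le_one_left (abs_nonneg _) (inv_le_one_of_one_le₀
    (by exact_mod_cast Nat.one_le_iff_ne_zero.2 (Nat.factorial_ne_zero _)))).trans ?_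
  refine (Finset.abs_sum_le_sum_abs _ _).trans ?_
  refine (Finset.sum_le_sum (g := fun _ => D) fun W _ => ?_).trans (by simp)
  have h1 := hD (wordIdx W) (by rwa [sum_wordIdx])
  rw [sum_wordIdx] at h1
  rw [abs_mul, abs_mul, abs_of_nonneg (pow_nonneg hs q)]
  refine (mul_le_of_le_one_right (by positivity) (hf.abs_wder_le _ (by simpa using hq') z)).trans h1

/-- Far from the diagonal the kernel matrix is diagonally dominant. -/
lemma maternForm_ge_of_offDiag {α : ℝ} {d n : ℕ} (y : Fin n → Fin d → ℝ)
    (hoff : ∀ i j, i ≠ j → n * |matern α d (y i - y j)| ≤ matern α d 0 / 2)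
    (hK : 0 ≤ matern α d 0) (c : Fin n → ℝ) :
    matern α d 0 / 2 * (∑ i, |c i|) ^ 2 ≤ n * maternForm α d y c := by
  have hsq : (∑ i, |c i|) ^ 2 ≤ n * ∑ i, c i ^ 2 := by
    have := sq_sum_le_card_mul_sum_sq (s := Finset.univ) (f := fun i => |c i|)
    simpa using this
  have hterm (i j : Fin n) :
      n * (if i = j then matern α d 0 * c i ^ 2 else 0) - matern α d 0 / 2 * (|c i| * |c j|) ≤
        n * (c i * c j * matern α d (y i - y j)) := by
    by_cases h : i = j
    · subst h
      rw [if_pos rfl, sub_self]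
      have : 0 ≤ matern α d 0 / 2 * (|c i| * |c i|) := by positivity
      nlinarith
    · rw [if_neg h]
      have h1 : |n * (c i * c j * matern α d (y i - y j))| ≤
          matern α d 0 / 2 * (|c i| * |c j|) := by
        rw [abs_mul, abs_mul, abs_mul, Nat.abs_cast]
        calc (n : ℝ) * (|c i| * |c j| * |matern α d (y i - y j)|) =
            n * |matern α d (y i - y j)| * (|c i| * |c j|) := by ring
          _ ≤ _ := mul_le_mul_of_nonneg_right (hoff i j h) (by positivity)
      linarith [neg_abs_le (n * (c i * c j * matern α d (y i - y j)))]
  have hsum := Finset.sum_le_sum fun i (_ : i ∈ Finset.univ) =>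
    Finset.sum_le_sum fun j (_ : j ∈ Finset.univ) => hterm i j
  have e1 : ∑ i, ∑ j, (n * (if i = j then matern α d 0 * c i ^ 2 else 0) -
      matern α d 0 / 2 * (|c i| * |c j|)) =
      n * (matern α d 0 * ∑ i, c i ^ 2) - matern α d 0 / 2 * (∑ i, |c i|) ^ 2 := by
    simp only [Finset.sum_sub_distrib, ← Finset.mul_sum, Finset.sum_ite_eq, Finset.mem_univ,
      if_true]
    rw [sq, Finset.sum_mul_sum]
    simp only [Finset.mul_sum]
  have e2 : ∑ i, ∑ j, n * (c i * c j * matern α d (y i - y j)) = n * maternForm α d y c := by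
    simp only [maternForm, Finset.mul_sum]
  rw [e1, e2] at hsum
  have : matern α d 0 * (∑ i, |c i|) ^ 2 ≤ n * (matern α d 0 * ∑ i, c i ^ 2) := by
    nlinarith
  linarith

/-- Coercivity of the Matérn form on well-separated norming sets, at every scale. -/
lemma exists_min_moment_sq_le_maternForm (α : ℝ) (hα : 0 < α) (d l : ℕ) (hd : 1 ≤ d)
    (cN : ℝ) (hcN : 0 < cN) (δ : ℝ) (hδ : 0 < δ) :
    ∃ κ > 0, ∀ w : Fin ((l + d).choose l) → Fin d → ℝ, (∀ i, w i ∈ Set.Icc 0 1) →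
      CubeNorming l w cN → (∀ i j, i ≠ j → δ ≤ ‖w i - w j‖) → ∀ h : ℝ, 0 < h →
      ∀ (c : Fin ((l + d).choose l) → ℝ) (k : multiIdx d l),
        κ * (min h 1 ^ (∑ j, k.1 j) * |moment w c k|) ^ 2 ≤ maternForm α d (fun i => h • w i) c := by
  set n := (l + d).choose l with hn
  have hn0 : (0 : ℝ) < n := by exact_mod_cast Nat.choose_pos (by omega)
  have hK := matern_zero_pos α hα d
  obtain ⟨R, hR, hfar⟩ := exists_matern_le α hα d (matern α d 0 / 2 / n) (by positivity)
  obtain ⟨κ, hκ, hnear⟩ := exists_moment_sq_le_maternForm α hα d l hd cN hcN (R / δ) (by positivity)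
  refine ⟨min κ (matern α d 0 / 2 / n), by positivity, fun w hw hN hsep h hh c k => ?_⟩
  have hmin0 : 0 < min h 1 := by positivity
  rcases le_or_gt h (R / δ) with hle | hgt
  · refine le_trans ?_ (hnear w hw hN h hh hle c k)
    have := min_le_left h 1
    have := min_le_left κ (matern α d 0 / 2 / n)
    gcongr
  · have hoff (i j : Fin n) (hij : i ≠ j) :
        n * |matern α d (h • w i - h • w j)| ≤ matern α d 0 / 2 := by
      rw [← le_div_iff₀' hn0]
      refine hfar _ ?_
      rw [← smul_sub, norm_smul, Real.norm_of_nonneg hh.le]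
      rw [div_lt_iff₀ hδ] at hgt
      exact hgt.le.trans (mul_le_mul_of_nonneg_left (hsep i j hij) hh.le)
    have h1 := maternForm_ge_of_offDiag (fun i => h • w i) hoff hK.le c
    have h2 : |moment w c k| ≤ ∑ i, |c i| := by
      refine (Finset.abs_sum_le_sum_abs _ _).trans (Finset.sum_le_sum fun i _ => ?_)
      rw [abs_mul]
      exact mul_le_of_le_one_right (abs_nonneg _) (abs_monom_le_one (hw i) _)
    have h3 : min h 1 ^ (∑ j, k.1 j) * |moment w c k| ≤ ∑ i, |c i| :=
      (mul_le_of_le_one_left (abs_nonneg _)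
        (pow_le_one₀ hmin0.le (min_le_right _ _))).trans h2
    calc _ ≤ matern α d 0 / 2 / n * (∑ i, |c i|) ^ 2 := by
          have := min_le_right κ (matern α d 0 / 2 / n)
          gcongr
      _ ≤ _ := by
          rw [div_mul_eq_mul_div, div_le_iff₀' hn0]
          exact h1

/-- The logarithmic factor at integer smoothness. -/
def logFactor (α : ℝ) (l : ℕ) (h : ℝ) : ℝ := if α = l + 1 then 1 + Real.log (1 / h) else 1

lemma one_le_logFactor {α : ℝ} {l : ℕ} {h : ℝ} (h0 : 0 < h) (h1 : h ≤ 1) :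
    1 ≤ logFactor α l h := by
  unfold logFactor
  split_ifs
  · have : 0 ≤ Real.log (1 / h) := Real.log_nonneg (by rw [le_div_iff₀ h0]; linarith)
    linarith
  · exact le_rfl

lemma rpow_mul_logFactor_le {α : ℝ} {l : ℕ} (hl : l < α) {h : ℝ} (h0 : 0 < h) (h1 : h ≤ 1) :
    h ^ (α - l) * logFactor α l h ≤ 1 := by
  unfold logFactor
  split_ifs with he
  · rw [show α - l = 1 by linarith, Real.rpow_one]
    have := Real.log_le_sub_one_of_pos (show 0 < 1 / h by positivity)
    calc h * (1 + Real.log (1 / h)) ≤ h * (1 / h) := by gcongr; linarith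
      _ = 1 := by field_simp
  · rw [mul_one]
    exact Real.rpow_le_one h0.le h1 (by linarith)

lemma exists_maternForm_le_logFactor (α : ℝ) (hα : 0 < α) (d l : ℕ) (hd : 1 ≤ d)
    (hαl : α ≤ l + 1) :
    ∃ C > 0, ∀ (n : ℕ) (y : Option (Fin n) → Fin d → ℝ) (b : Option (Fin n) → ℝ),
      (∀ i, y i ∈ Set.Icc 0 1) → (∀ k : multiIdx d l, moment y b k = 0) →
      ∀ h : ℝ, 0 < h → h ≤ 1 →
        maternForm α d (fun i => h • y i) b ≤
          C * (∑ i, |b i|) ^ 2 * (h ^ α * logFactor α l h) ^ 2 := by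
  obtain ⟨C, hC, hform⟩ := exists_maternForm_le α hα d l hd hαl
  rcases eq_or_lt_of_le hαl with he | hlt
  · refine ⟨C, hC, fun n y b hy hb h h0 h1 => ?_⟩
    have hlog : 0 ≤ Real.log (1 / h) := Real.log_nonneg (by rw [le_div_iff₀ h0]; linarith)
    refine (hform n y b hy hb h _ h0 h1 hlog (middle_integral_eq_of_eq he h0).le).trans ?_
    have e : h ^ (2 * α) = (h ^ α) ^ 2 := by
      rw [← Real.rpow_natCast, ← Real.rpow_mul h0.le]; congr 1; push_cast; ring
    rw [e, mul_pow, logFactor, if_pos he]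
    gcongr
    nlinarith
  · have hg : 0 < 1 / (2 * (l + 1 - α)) := by
      have : 0 < l + 1 - α := by linarith
      positivity
    refine ⟨C * (1 + 1 / (2 * (l + 1 - α))), by positivity, fun n y b hy hb h h0 h1 => ?_⟩
    refine (hform n y b hy hb h _ h0 h1 hg.le (middle_integral_le_of_lt hlt h0)).trans ?_
    have e : h ^ (2 * α) = (h ^ α) ^ 2 := by
      rw [← Real.rpow_natCast, ← Real.rpow_mul h0.le]; congr 1; push_cast; ring
    rw [e, logFactor, if_neg hlt.ne]
    apply le_of_eq; ring

/-- Stability and approximate polynomial reproduction of the kriging weights. -/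
lemma exists_kriging_bound (α : ℝ) (hα : 0 < α) (d l : ℕ) (hd : 1 ≤ d) (hl : l < α)
    (hαl : α ≤ l + 1) (cN : ℝ) (hcN : 0 < cN) (δ : ℝ) (hδ : 0 < δ) :
    ∃ C > 0, ∀ (w : Fin ((l + d).choose l) → Fin d → ℝ) (p : Fin d → ℝ),
      (∀ i, w i ∈ Set.Icc 0 1) → p ∈ Set.Icc 0 1 → CubeNorming l w cN →
      (∀ i j, i ≠ j → δ ≤ ‖w i - w j‖) → ∀ h : ℝ, 0 < h →
      IsUnit (maternMat α d fun i => h • w i).det ∧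
      ∃ u : Fin ((l + d).choose l) → ℝ,
        (∀ f, (fun i => matern α d (h • p - h • w i)) ⬝ᵥ
          ((maternMat α d fun i => h • w i)⁻¹ *ᵥ f) = u ⬝ᵥ f) ∧
        (∀ i, |u i| ≤ C) ∧
        (h ≤ 1 → ∀ k : multiIdx d l, h ^ (∑ j, k.1 j) * |monom p k - moment w u k| ≤
          C * (h ^ α * logFactor α l h)) := by
  set n := (l + d).choose l with hn
  obtain ⟨B, hB, hvand⟩ := exists_vandermonde_inverse d l hd cN hcN
  obtain ⟨κ, hκ, hcoer⟩ := exists_min_moment_sq_le_maternForm α hα d l hd cN hcN δ hδ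
  obtain ⟨C₁, hC₁, hform⟩ := exists_maternForm_le_logFactor α hα d l hd hαl
  have hK := matern_zero_pos α hα d
  set N : ℝ := (Fintype.card (multiIdx d l) : ℝ) with hN
  set Q : ℝ := Real.sqrt (C₁ / κ) * (1 + n * (N * B)) with hQ
  set Q' : ℝ := Real.sqrt (matern α d 0 / κ) with hQ'
  have hN0 : 0 ≤ N := Nat.cast_nonneg _
  have hQ0 : 0 ≤ Q := by positivity
  have hQ'0 : 0 ≤ Q' := by positivity
  refine ⟨1 + Q + N * B * Q' + (N * B + N * B * Q), by positivity,
    fun w p hw hp hnorm hsep h hh => ?_⟩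
  obtain ⟨V, hVB, hV, hV'⟩ := hvand w hnorm
  have hcoer' := hcoer w hw hnorm hsep h hh
  have hmin0 : 0 < min h 1 := by positivity
  have hdet : IsUnit (maternMat α d fun i => h • w i).det := by
    refine isUnit_det_maternMat_of_form α _ fun c hc => ?_
    have hm (k : multiIdx d l) : moment w c k = 0 := by
      have h1 := hcoer' c k
      rw [hc] at h1
      have h2 : (min h 1 ^ (∑ j, k.1 j) * |moment w c k|) ^ 2 = 0 :=
        le_antisymm (by nlinarith) (sq_nonneg _)
      have h3 := pow_eq_zero_iff (two_ne_zero) |>.1 h2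
      rcases mul_eq_zero.1 h3 with h4 | h4
      · exact absurd h4 (by positivity)
      · exact abs_eq_zero.1 h4
    funext i
    have := abs_coeff_le_of_moment hVB hV' c i
    simp only [hm, abs_zero, mul_zero, Finset.sum_const_zero] at this
    exact abs_eq_zero.1 (le_antisymm this (abs_nonneg _))
  refine ⟨hdet, ?_⟩
  obtain ⟨u, hu, huK, hopt⟩ := kriging_weights α hα (fun i => h • w i) (h • p) hdet
  refine ⟨u, hu, ?_⟩
  rcases le_or_gt h 1 with hle | hgt
  · set v : Fin n → ℝ := fun i => ∑ k, V k i * monom p k.1 with hv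
    have hvB (i : Fin n) : |v i| ≤ N * B := by
      refine (Finset.abs_sum_le_sum_abs _ _).trans ?_
      refine (Finset.sum_le_sum (g := fun _ => B) fun k _ => ?_).trans
        (by simp [hN])
      rw [abs_mul]
      exact (mul_le_of_le_one_right (abs_nonneg _) (abs_monom_le_one hp _)).trans (hVB k i)
    have hvm (k : multiIdx d l) : moment w v k = monom p k := by
      simp only [moment, hv, Finset.sum_mul]
      rw [Finset.sum_comm]
      have (k' : multiIdx d l) : ∑ i, V k' i * monom p k'.1 * monom (w i) k.1 =
          if k' = k then monom p k.1 else 0 := by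
        have := congrArg (fun t => t * monom p k'.1) (hV k' k)
        simp only [Finset.sum_mul] at this
        rw [show ∑ i, V k' i * monom p k'.1 * monom (w i) k.1 =
          ∑ i, V k' i * monom (w i) k.1 * monom p k'.1 from
            Finset.sum_congr rfl fun i _ => by ring, this]
        split_ifs with hk
        · rw [hk, one_mul]
        · rw [zero_mul]
      rw [Finset.sum_congr rfl fun k' _ => this k']
      simp
    have hlam := one_le_logFactor (α := α) (l := l) hh hle
    set T := h ^ α * logFactor α l h with hT
    have hT0 : 0 ≤ T := by positivity
    have hE : maternForm α d (fun i => h • w i) (v - u) ≤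
        C₁ * (1 + n * (N * B)) ^ 2 * T ^ 2 := by
      refine (hopt v).trans ?_
      have hext : (fun o : Option (Fin n) => o.elim (h • p) fun i => h • w i) =
          fun o => h • o.elim p w := by
        funext o; cases o <;> rfl
      rw [hext]
      refine (hform n (fun o => o.elim p w) _ ?_ ?_ h hh hle).trans ?_
      · rintro (_ | i)
        exacts [hp, hw i]
      · intro k
        have := hvm k
        simp only [moment] at this
        simp [moment, Fintype.sum_option, this]
      · have h5 : ∑ o : Option (Fin n), |o.elim 1 (-v)| ≤ 1 + n * (N * B) := by
          rw [Fintype.sum_option]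
          simp only [Option.elim, abs_one, Pi.neg_apply, abs_neg]
          have : ∑ i, |v i| ≤ ∑ _i : Fin n, N * B := Finset.sum_le_sum fun i _ => hvB i
          simp only [Finset.sum_const, Finset.card_univ, Fintype.card_fin, nsmul_eq_mul] at this
          linarith
        gcongr
    have hmom (k : multiIdx d l) : h ^ (∑ j, k.1 j) * |moment w (v - u) k| ≤ Q * T := by
      have h1 := (hcoer' (v - u) k).trans hE
      rw [min_eq_left hle] at h1
      refine (sq_le_sq₀ (by positivity) (by positivity)).1 ?_
      rw [hQ, mul_pow (_ * _) T, mul_pow (Real.sqrt _), Real.sq_sqrt (by positivity)]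
      rw [← le_div_iff₀' hκ] at h1
      refine h1.trans (le_of_eq ?_)
      ring
    have hsub (k : multiIdx d l) : moment w (v - u) k = monom p k - moment w u k := by
      rw [← hvm k]
      simp [moment, sub_mul]
    have hcT (i : Fin n) : |(v - u) i| ≤ N * B * Q := by
      refine (abs_coeff_le_of_moment hVB hV' (v - u) i).trans ?_
      refine (Finset.sum_le_sum (g := fun _ => B * Q) fun k _ => ?_).trans
        (by simp [hN, mul_assoc])
      refine mul_le_mul_of_nonneg_left ?_ hB.le
      have h1 := hmom k
      have hkl : ∑ j, k.1 j ≤ l := mem_multiIdx.1 k.2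
      have h2 : h ^ l * |moment w (v - u) k| ≤ Q * T :=
        (mul_le_mul_of_nonneg_right (pow_le_pow_of_le_one hh.le hle hkl) (abs_nonneg _)).trans h1
      have h3 : T = h ^ l * (h ^ (α - l) * logFactor α l h) := by
        rw [hT, ← mul_assoc, ← Real.rpow_natCast, ← Real.rpow_add hh]
        congr 2; ring
      have h4 : T ≤ h ^ l := by
        rw [h3]
        exact mul_le_of_le_one_right (by positivity) (rpow_mul_logFactor_le hl hh hle)
      have h6 : h ^ l * |moment w (v - u) k| ≤ h ^ l * Q := by
        rw [mul_comm (h ^ l) Q]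
        exact h2.trans (mul_le_mul_of_nonneg_left h4 hQ0)
      exact le_of_mul_le_mul_left h6 (by positivity)
    refine ⟨fun i => ?_, fun _ k => ?_⟩
    · have h1 : |u i| ≤ |v i| + |(v - u) i| := by
        have : u i = v i - (v - u) i := by simp
        rw [this]
        exact abs_sub _ _
      have : 0 ≤ N * B * Q' := by positivity
      linarith [hvB i, hcT i]
    · rw [← hsub]
      refine (hmom k).trans (mul_le_mul_of_nonneg_right ?_ hT0)
      have : 0 ≤ N * B * Q' := by positivity
      have : 0 ≤ N * B * Q := by positivity
      have : 0 ≤ N * B := by positivity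
      linarith
  · refine ⟨fun i => ?_, fun h1 => absurd h1 (not_le.2 hgt)⟩
    have hmom (k : multiIdx d l) : |moment w u k| ≤ Q' := by
      have h1 := (hcoer' u k).trans huK
      rw [min_eq_right hgt.le, one_pow, one_mul, ← le_div_iff₀' hκ] at h1
      exact Real.le_sqrt_of_sq_le h1
    have h1 : |u i| ≤ N * B * Q' := by
      refine (abs_coeff_le_of_moment hVB hV' u i).trans ?_
      refine (Finset.sum_le_sum (g := fun _ => B * Q') fun k _ =>
        mul_le_mul_of_nonneg_left (hmom k) hB.le).trans (by simp [hN, mul_assoc])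
    have : 0 ≤ N * B * Q := by positivity
    have : 0 ≤ N * B := by positivity
    linarith

lemma lbelow_lt {α : ℝ} (hα : 0 < α) : (lbelow α : ℝ) < α := by
  unfold lbelow
  have h1 : 1 ≤ Nat.ceil α := Nat.one_le_ceil_iff.2 hα
  have h2 := Nat.ceil_lt_add_one hα.le
  push_cast [h1]
  linarith

lemma le_lbelow_add_one {α : ℝ} (hα : 0 < α) : α ≤ lbelow α + 1 := by
  unfold lbelow
  have h1 : 1 ≤ Nat.ceil α := Nat.one_le_ceil_iff.2 hα
  push_cast [h1]
  linarith [Nat.le_ceil α]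

lemma isNatVal_iff {α : ℝ} (hα : 0 < α) : IsNatVal α ↔ α = lbelow α + 1 := by
  constructor
  · rintro ⟨n, rfl⟩
    have hn : 1 ≤ n := by exact_mod_cast hα
    unfold lbelow
    rw [Nat.ceil_natCast]
    push_cast [hn]
    ring
  · intro h
    exact ⟨lbelow α + 1, by exact_mod_cast h⟩

lemma lbelow_mono {α β : ℝ} (h : β ≤ α) : lbelow β ≤ lbelow α :=
  Nat.sub_le_sub_right (Nat.ceil_mono h) 1

/-- The logarithmic factor in the error bound. -/
def errorFactor (α L : ℝ) : ℝ := if α = lbelow α + 1 then Real.log (1 / L) else 1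

lemma log_two_le_errorFactor {α L : ℝ} (h0 : 0 < L) (h1 : L ≤ 1 / 2) :
    Real.log 2 ≤ errorFactor α L := by
  unfold errorFactor
  split_ifs
  · refine Real.log_le_log two_pos ?_
    rw [le_div_iff₀ h0]; linarith
  · linarith [Real.log_two_lt_d9]

lemma rpow_sub_le {α τ : ℝ} {n : ℕ} (hn : n < α) (hτ : 0 < τ) : τ ^ (α - n) ≤ τ ^ α + 1 := by
  rcases le_or_gt τ 1 with h | h
  · have h1 := Real.rpow_le_one hτ.le h (sub_nonneg.2 hn.le)
    have h2 : 0 < τ ^ α := by positivity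
    linarith
  · have : τ ^ (α - n) ≤ τ ^ α :=
      Real.rpow_le_rpow_of_exponent_le h.le (by linarith [Nat.cast_nonneg (α := ℝ) n])
    linarith

lemma exists_rpow_mul_logFactor_le (α : ℝ) (hα : 0 < α) (cd : ℝ) (hcd : 0 < cd) :
    ∃ E > 0, ∀ (L τ s : ℝ) (n : ℕ), 0 < L → L ≤ 1 / 2 → cd * L ≤ s → 0 < τ → n ≤ lbelow α →
      τ ^ (α - n) * logFactor α (lbelow α) (τ * s) ≤ E * ((τ ^ α + 1) * errorFactor α L) := by
  have hl2 : 0 < Real.log 2 := Real.log_pos one_lt_two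
  set E₀ : ℝ := 1 + (1 + |Real.log cd|) / Real.log 2 with hE₀
  have hE₀0 : 1 ≤ E₀ := le_add_of_nonneg_right (by positivity)
  refine ⟨E₀ + 1 / Real.log 2, by positivity, fun L τ s n hL hL2 hs hτ hn => ?_⟩
  have hs0 : 0 < s := lt_of_lt_of_le (by positivity) hs
  have hnl : (n : ℝ) ≤ lbelow α := by exact_mod_cast hn
  have hpow := rpow_sub_le (lt_of_le_of_lt hnl (lbelow_lt hα)) hτ
  have hf := log_two_le_errorFactor (α := α) hL hL2
  have hp0 : 0 < τ ^ (α - n) := by positivity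
  have hp1 : 0 < τ ^ α := by positivity
  unfold logFactor
  split_ifs with he
  · have hF : errorFactor α L = Real.log (1 / L) := if_pos he
    rw [hF] at hf ⊢
    set Λ := Real.log (1 / L) with hΛ
    have hlog : 1 + Real.log (1 / (τ * s)) ≤ E₀ * Λ - Real.log τ := by
      have h1 : Real.log (cd * L) ≤ Real.log s := Real.log_le_log (by positivity) hs
      rw [Real.log_mul hcd.ne' hL.ne'] at h1
      have h2 : Λ = -Real.log L := by rw [hΛ, one_div, Real.log_inv]
      rw [one_div, Real.log_inv, Real.log_mul hτ.ne' hs0.ne']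
      have h3 : (1 + |Real.log cd|) ≤ (1 + |Real.log cd|) / Real.log 2 * Λ := by
        rw [div_mul_eq_mul_div, le_div_iff₀ hl2]
        exact mul_le_mul_of_nonneg_left hf (by positivity)
      rw [hE₀, add_mul, one_mul]
      linarith [neg_abs_le (Real.log cd)]
    have hτlog : τ ^ (α - n) * (-Real.log τ) ≤ 1 := by
      rcases le_or_gt τ 1 with h | h
      · have h1 : τ ^ (α - n) ≤ τ := by
          conv_rhs => rw [← Real.rpow_one τ]
          exact Real.rpow_le_rpow_of_exponent_ge hτ h (by linarith)
        have h2 := Real.log_nonpos hτ.le h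
        have h3 : -Real.log τ ≤ 1 / τ := by
          have := Real.log_le_sub_one_of_pos (show 0 < 1 / τ by positivity)
          rw [one_div, Real.log_inv] at this
          rw [one_div]; linarith
        calc _ ≤ τ * (1 / τ) := mul_le_mul h1 h3 (by linarith) hτ.le
          _ = 1 := by field_simp
      · have := Real.log_pos h
        nlinarith
    have hΛ0 : 0 < Λ := hl2.trans_le hf
    have h1 : (1 : ℝ) ≤ 1 / Real.log 2 * Λ := by
      rw [div_mul_eq_mul_div, le_div_iff₀ hl2]; linarith
    calc τ ^ (α - n) * (1 + Real.log (1 / (τ * s))) ≤ τ ^ (α - n) * (E₀ * Λ - Real.log τ) := by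
          gcongr
      _ = τ ^ (α - n) * (E₀ * Λ) + τ ^ (α - n) * (-Real.log τ) := by ring
      _ ≤ (τ ^ α + 1) * (E₀ * Λ) + 1 / Real.log 2 * Λ := by
          refine add_le_add (mul_le_mul_of_nonneg_right hpow (by positivity)) (hτlog.trans h1)
      _ ≤ (τ ^ α + 1) * (E₀ * Λ) + (τ ^ α + 1) * (1 / Real.log 2 * Λ) := by
          have : 0 < 1 / Real.log 2 * Λ := by positivity
          nlinarith
      _ = _ := by ring
  · rw [errorFactor, if_neg he, mul_one, mul_one]
    have : 0 < 1 / Real.log 2 := by positivity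
    nlinarith

/-- Error of a linear rule on a Hölder function in terms of its defect on monomials. -/
lemma HolderBall.abs_sub_sum_le {d n : ℕ} {β : ℝ} (hβ : 0 < β) {f : (Fin d → ℝ) → ℝ}
    (hf : HolderBall d β f) (z : Fin d → ℝ) {s : ℝ} (hs : 0 ≤ s) {w : Fin n → Fin d → ℝ}
    {p : Fin d → ℝ} (hw : ∀ i, w i ∈ Set.Icc 0 1) (hp : p ∈ Set.Icc 0 1) {u : Fin n → ℝ}
    {C D : ℝ} (hu : ∀ i, |u i| ≤ C)
    (hD : ∀ k : Fin d → ℕ, ∑ j, k j ≤ lbelow β →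
      s ^ (∑ j, k j) * |monom p k - moment w u k| ≤ D) :
    |f (z + s • p) - ∑ i, u i * f (z + s • w i)| ≤
      (1 + n * C) * (d ^ lbelow β * d ^ (β - (lbelow β : ℝ)) * s ^ β) +
        (∑ q ∈ Finset.range (lbelow β + 1), (d : ℝ) ^ q) * D := by
  set y : Option (Fin n) → Fin d → ℝ := fun o => o.elim p w with hy
  set b : Option (Fin n) → ℝ := fun o => o.elim 1 (-u) with hb
  have hyI (o : Option (Fin n)) : y o ∈ Set.Icc 0 1 := by
    rcases o with _ | i
    exacts [hp, hw i]
  have hsplit : f (z + s • p) - ∑ i, u i * f (z + s • w i) =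
      ∑ o, b o * (f (z + s • y o) - taylorSum (lbelow β) f z (s • y o)) +
        ∑ o, b o * taylorSum (lbelow β) f z (s • y o) := by
    rw [← Finset.sum_add_distrib]
    simp only [← mul_add, sub_add_cancel, Fintype.sum_option]
    simp [hy, hb, sub_eq_add_neg]
  rw [hsplit]
  refine (abs_add_le _ _).trans (add_le_add ?_ ?_)
  · set G : ℝ := d ^ lbelow β * d ^ (β - (lbelow β : ℝ)) * s ^ β with hG
    have hrem (o : Option (Fin n)) :
        |f (z + s • y o) - taylorSum (lbelow β) f z (s • y o)| ≤ G := by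
      refine (hf.abs_sub_taylorSum_le (lbelow_lt hβ).le hβ z (s • y o)).trans ?_
      refine mul_le_mul_of_nonneg_left (Real.rpow_le_rpow (norm_nonneg _) ?_ hβ.le)
        (by positivity)
      rw [norm_smul, Real.norm_of_nonneg hs]
      refine mul_le_of_le_one_right hs ((pi_norm_le_iff_of_nonneg zero_le_one).2 fun t => ?_)
      rw [Real.norm_of_nonneg ((hyI o).1 t)]
      exact (hyI o).2 t
    have hbs : ∑ o, |b o| ≤ 1 + n * C := by
      rw [Fintype.sum_option]
      have : ∑ i, |u i| ≤ ∑ _i : Fin n, C := Finset.sum_le_sum fun i _ => hu i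
      simp only [Finset.sum_const, Finset.card_univ, Fintype.card_fin, nsmul_eq_mul] at this
      simpa [hb] using this
    calc |∑ o, b o * (f (z + s • y o) - taylorSum (lbelow β) f z (s • y o))|
        ≤ ∑ o, |b o| * G := by
          refine (Finset.abs_sum_le_sum_abs _ _).trans (Finset.sum_le_sum fun o _ => ?_)
          rw [abs_mul]
          exact mul_le_mul_of_nonneg_left (hrem o) (abs_nonneg _)
      _ = (∑ o, |b o|) * G := by rw [Finset.sum_mul]
      _ ≤ _ := mul_le_mul_of_nonneg_right hbs (by positivity)
  · refine hf.abs_sum_mul_taylorSum_le z hs y b fun k hk => ?_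
    have : moment y b k = monom p k - moment w u k := by
      simp [moment, Fintype.sum_option, hy, hb, sub_eq_add_neg]
    rw [this]
    exact hD k hk

lemma exists_interpolation_error_le (α β : ℝ) (hα : 0 < α) (hβ : 0 < β) (hβα : β ≤ α) (d : ℕ)
    (hd : 1 ≤ d) (cL cd cN : ℝ) (hcd : 0 < cd) (hcLcd : cd ≤ cL) (hcN : 0 < cN) :
    ∃ C : ℝ, 0 < C ∧
      ∀ L : ℝ, 0 < L → L ≤ 1 / 2 → ∀ x : Fin d → ℝ,
        ∀ w : Fin ((lbelow α + d).choose (lbelow α)) → Fin d → ℝ,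
          GeomHyp α d cL cd cN L w x →
          ∀ f₀ : (Fin d → ℝ) → ℝ, HolderBall d β f₀ →
            ∀ τ : ℝ, 0 < τ →
              IsUnit (maternMat α d (fun i t => τ * w i t)).det ∧
                |f₀ x - (fun i => matern α d fun t => τ * x t - τ * w i t) ⬝ᵥ
                    ((maternMat α d (fun i t => τ * w i t))⁻¹ *ᵥ fun i => f₀ (w i))| ≤
                  C * ((τ ^ α * L ^ α + L ^ β) * errorFactor α L) := by
  set l := lbelow α with hl
  set n := (l + d).choose l with hn
  have hn0 : 0 < n := Nat.choose_pos (by omega)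
  have hcL : 0 < cL := hcd.trans_le hcLcd
  have hl2 : 0 < Real.log 2 := Real.log_pos one_lt_two
  obtain ⟨C, hC, hkrig⟩ := exists_kriging_bound α hα d l hd (lbelow_lt hα) (le_lbelow_add_one hα)
    cN hcN (cd / cL) (by positivity)
  obtain ⟨E, hE, hscale⟩ := exists_rpow_mul_logFactor_le α hα cd hcd
  set G : ℝ := d ^ lbelow β * d ^ (β - (lbelow β : ℝ)) with hG
  set S : ℝ := ∑ q ∈ Finset.range (lbelow β + 1), (d : ℝ) ^ q with hS
  have hG0 : 0 ≤ G := by positivity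
  have hS0 : 0 ≤ S := by positivity
  have hnC : 0 < 1 + n * C := by positivity
  have hA : 0 ≤ (1 + n * C) * G * cL ^ β / Real.log 2 + S * C * cL ^ α * E := by positivity
  refine ⟨(1 + n * C) * G * cL ^ β / Real.log 2 + S * C * cL ^ α * E +
    (1 + n * C) * cL ^ α / Real.log 2, by positivity, ?_⟩
  intro L hL hL2 x w hgeom f hf τ hτ
  obtain ⟨z, s, -, hsL, hwz, hxz, hsep, hxsep, hnorm⟩ := hgeom
  have hdiff {a b : Fin d → ℝ} (ha : a ∈ cube d z s) (hb : b ∈ cube d z s) (t : Fin d) :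
      |a t - b t| ≤ s := by
    rw [abs_le]
    constructor <;> linarith [(ha t).1, (ha t).2, (hb t).1, (hb t).2]
  have hs : cd * L ≤ s := by
    obtain ⟨t, ht⟩ := hxsep ⟨0, hn0⟩
    exact ht.trans (hdiff (hwz _) hxz t)
  have hs0 : 0 < s := lt_of_lt_of_le (by positivity) hs
  set y : Fin n → Fin d → ℝ := fun i t => (w i t - z t) / s with hy
  set p : Fin d → ℝ := fun t => (x t - z t) / s with hp
  have hw_eq (i : Fin n) : w i = z + s • y i := by
    funext t
    simp only [Pi.add_apply, Pi.smul_apply, hy, smul_eq_mul]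
    field_simp; ring
  have hx_eq : x = z + s • p := by
    funext t
    simp only [Pi.add_apply, Pi.smul_apply, hp, smul_eq_mul]
    field_simp; ring
  have hunit {a : Fin d → ℝ} (ha : a ∈ cube d z s) : (fun t => (a t - z t) / s) ∈ Set.Icc 0 1 := by
    refine ⟨fun t => ?_, fun t => ?_⟩
    · exact div_nonneg (by linarith [(ha t).1]) hs0.le
    · exact (div_le_one hs0).2 (by linarith [(ha t).2])
  have hyI (i : Fin n) : y i ∈ Set.Icc 0 1 := hunit (hwz i)
  have hpI : p ∈ Set.Icc 0 1 := hunit hxz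
  have hysep (i j : Fin n) (hij : i ≠ j) : cd / cL ≤ ‖y i - y j‖ := by
    obtain ⟨t, ht⟩ := hsep i j hij
    refine le_trans ?_ (norm_le_pi_norm (y i - y j) t)
    have e : (y i - y j) t = (w i t - w j t) / s := by
      simp only [Pi.sub_apply, hy]; ring
    rw [e, Real.norm_eq_abs, abs_div, abs_of_pos hs0, div_le_div_iff₀ hcL hs0]
    calc cd * s ≤ cd * (cL * L) := by gcongr
      _ = cd * L * cL := by ring
      _ ≤ _ := by gcongr
  have hh0 : 0 < τ * s := by positivity
  obtain ⟨hdet, u, hu, huC, hmom⟩ := hkrig y p hyI hpI (hnorm.cubeNorming hs0) hysep (τ * s) hh0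
  have hmat : maternMat α d (fun i t => τ * w i t) = maternMat α d fun i => (τ * s) • y i := by
    ext i j
    simp only [maternMat, Matrix.of_apply]
    congr 1
    funext t
    simp only [hw_eq, Pi.sub_apply, Pi.add_apply, Pi.smul_apply, smul_eq_mul]
    ring
  have hvec : (fun i => matern α d fun t => τ * x t - τ * w i t) =
      fun i => matern α d ((τ * s) • p - (τ * s) • y i) := by
    funext i
    congr 1
    funext t
    rw [hx_eq, hw_eq i]
    simp only [Pi.sub_apply, Pi.add_apply, Pi.smul_apply, smul_eq_mul]
    ring
  rw [hmat, hvec, hu]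
  refine ⟨hdet, ?_⟩
  have hF := log_two_le_errorFactor (α := α) hL hL2
  set Λ := errorFactor α L with hΛ
  set T := τ ^ α * L ^ α + L ^ β with hT
  have hΛ0 : 0 < Λ := hl2.trans_le hF
  have hT0 : 0 < T := by positivity
  have hTΛ : T ≤ T * Λ / Real.log 2 := by
    rw [le_div_iff₀ hl2]
    exact mul_le_mul_of_nonneg_left hF hT0.le
  have hTΛ0 : 0 < T * Λ := by positivity
  rcases le_or_gt (τ * s) 1 with hle | hgt
  · have hLα : L ^ α * (τ ^ α + 1) ≤ T := by
      have : L ^ α ≤ L ^ β := Real.rpow_le_rpow_of_exponent_ge hL (by linarith) hβα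
      rw [hT]; linarith
    have hD (k : Fin d → ℕ) (hk : ∑ j, k j ≤ lbelow β) :
        s ^ (∑ j, k j) * |monom p k - moment y u k| ≤ C * cL ^ α * E * (T * Λ) := by
      have hkl : ∑ j, k j ≤ l := hk.trans (lbelow_mono hβα)
      have h1 := hmom hle ⟨k, mem_multiIdx.2 hkl⟩
      simp only at h1
      set q := ∑ j, k j with hq
      have hτq : 0 < τ ^ q := by positivity
      have h2 : τ ^ α = τ ^ q * τ ^ (α - q) := by
        rw [← Real.rpow_natCast, ← Real.rpow_add hτ]; congr 1; ring
      rw [mul_pow, Real.mul_rpow hτ.le hs0.le, h2] at h1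
      have h3 : s ^ q * |monom p k - moment y u k| ≤
          C * (s ^ α * (τ ^ (α - q) * logFactor α l (τ * s))) := by
        refine le_of_mul_le_mul_left ?_ hτq
        calc _ = τ ^ q * s ^ q * |monom p k - moment y u k| := by ring
          _ ≤ _ := h1
          _ = _ := by ring
      have h4 : s ^ α ≤ cL ^ α * L ^ α := by
        rw [← Real.mul_rpow hcL.le hL.le]
        exact Real.rpow_le_rpow hs0.le hsL hα.le
      calc _ ≤ C * (s ^ α * (τ ^ (α - q) * logFactor α l (τ * s))) := h3
        _ ≤ C * (s ^ α * (E * ((τ ^ α + 1) * Λ))) := by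
            have := hscale L τ s q hL hL2 hs hτ hkl
            exact mul_le_mul_of_nonneg_left (mul_le_mul_of_nonneg_left this (by positivity)) hC.le
        _ ≤ C * (cL ^ α * L ^ α * (E * ((τ ^ α + 1) * Λ))) := by gcongr
        _ = C * cL ^ α * E * (L ^ α * (τ ^ α + 1) * Λ) := by ring
        _ ≤ _ := by gcongr
    have herr := hf.abs_sub_sum_le hβ z hs0.le hyI hpI huC hD
    rw [← hx_eq] at herr
    simp only [← hw_eq] at herr
    refine herr.trans ?_
    have h5 : s ^ β ≤ cL ^ β * (T * Λ / Real.log 2) := by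
      calc s ^ β ≤ (cL * L) ^ β := Real.rpow_le_rpow hs0.le hsL hβ.le
        _ = cL ^ β * L ^ β := Real.mul_rpow hcL.le hL.le
        _ ≤ _ := by
            gcongr
            refine le_trans ?_ hTΛ
            rw [hT]
            exact le_add_of_nonneg_left (by positivity)
    calc _ ≤ (1 + n * C) * (G * (cL ^ β * (T * Λ / Real.log 2))) +
          S * (C * cL ^ α * E * (T * Λ)) := by gcongr
      _ ≤ (1 + n * C) * (G * (cL ^ β * (T * Λ / Real.log 2))) +
          S * (C * cL ^ α * E * (T * Λ)) + (1 + n * C) * cL ^ α / Real.log 2 * (T * Λ) :=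
            le_add_of_nonneg_right (by positivity)
      _ = _ := by ring
  · have hf1 (a : Fin d → ℝ) : |f a| ≤ 1 := hf.abs_wder_le [] (by simp) a
    have h1 : |f x - u ⬝ᵥ fun i => f (w i)| ≤ 1 + n * C := by
      refine (abs_sub _ _).trans (add_le_add (hf1 x) ?_)
      refine (Finset.abs_sum_le_sum_abs _ _).trans ?_
      refine (Finset.sum_le_sum (g := fun _ => C) fun i _ => ?_).trans
        (by rw [Finset.sum_const, Finset.card_univ, Fintype.card_fin, nsmul_eq_mul])
      rw [abs_mul]
      exact (mul_le_of_le_one_right (abs_nonneg _) (hf1 _)).trans (huC i)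
    have h2 : 1 ≤ cL ^ α * (T * Λ / Real.log 2) := by
      have h3 : 1 ≤ cL * (τ * L) := by
        have : τ * s ≤ τ * (cL * L) := by gcongr
        linarith
      calc (1 : ℝ) ≤ (cL * (τ * L)) ^ α := Real.one_le_rpow h3 hα.le
        _ = cL ^ α * (τ ^ α * L ^ α) := by
            rw [Real.mul_rpow hcL.le (by positivity), Real.mul_rpow hτ.le hL.le]
        _ ≤ _ := by
            gcongr
            refine le_trans ?_ hTΛ
            rw [hT]
            exact le_add_of_nonneg_right (by positivity)
    refine h1.trans ?_
    calc 1 + n * C ≤ (1 + n * C) * (cL ^ α * (T * Λ / Real.log 2)) :=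
          le_mul_of_one_le_right hnC.le h2
      _ = (1 + n * C) * cL ^ α / Real.log 2 * (T * Λ) := by ring
      _ ≤ _ := by
          refine mul_le_mul_of_nonneg_right (le_add_of_nonneg_left hA) hTΛ0.le

/-- Lemma `Holder appro`: under the geometric hypotheses at scale
`L ∈ (0,1/2]`, for `f₀ ∈ C^β_1` with `β ≤ α` and any `τ > 0`, Matérn kernel interpolation
from `τA` to `τx` applied to the values `f₀(A)` incurs error at most
`C (τ^α L^α + L^β) Λ`. -/
theorem stmt16 (α β : ℝ) (hα : 0 < α) (hβ : 0 < β) (hβα : β ≤ α) (d : ℕ) (hd : 1 ≤ d)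
    (cL cd cN : ℝ) (hcd : 0 < cd) (hcLcd : cd ≤ cL) (hcN : 0 < cN) :
    ∃ C : ℝ, 0 < C ∧
      ∀ L : ℝ, 0 < L → L ≤ 1 / 2 → ∀ x : Fin d → ℝ,
        ∀ w : Fin ((lbelow α + d).choose (lbelow α)) → Fin d → ℝ,
          GeomHyp α d cL cd cN L w x →
          ∀ f₀ : (Fin d → ℝ) → ℝ, HolderBall d β f₀ →
            ∀ τ : ℝ, 0 < τ →
              IsUnit (maternMat α d (fun i t => τ * w i t)).det ∧
              (¬ IsNatVal α →
                |f₀ x - (fun i => matern α d fun t => τ * x t - τ * w i t) ⬝ᵥ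
                    ((maternMat α d (fun i t => τ * w i t))⁻¹ *ᵥ fun i => f₀ (w i))| ≤
                  C * (τ ^ α * L ^ α + L ^ β)) ∧
              (IsNatVal α →
                |f₀ x - (fun i => matern α d fun t => τ * x t - τ * w i t) ⬝ᵥ
                    ((maternMat α d (fun i t => τ * w i t))⁻¹ *ᵥ fun i => f₀ (w i))| ≤
                  C * ((τ ^ α * L ^ α + L ^ β) * Real.log (1 / L))) := by
  obtain ⟨C, hC, h⟩ := exists_interpolation_error_le α β hα hβ hβα d hd cL cd cN hcd hcLcd hcN
  refine ⟨C, hC, fun L hL hL2 x w hgeom f₀ hf τ hτ => ?_⟩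
  obtain ⟨hdet, herr⟩ := h L hL hL2 x w hgeom f₀ hf τ hτ
  refine ⟨hdet, fun hnat => ?_, fun hnat => ?_⟩
  · rwa [errorFactor, if_neg (mt (isNatVal_iff hα).2 hnat), mul_one] at herr
  · rwa [errorFactor, if_pos ((isNatVal_iff hα).1 hnat)] at herr
end
end

section
/- Let n ≥ 1 and let K ∈ ℝ^{n×n} be symmetric positive definite. For each i ∈ {2, …, n} fix a nonempty parent set pa(i) ⊆ {1, …, i−1}, and define b_i = (K_{pa(i),pa(i)})⁻¹ K_{pa(i),i} ∈ ℝ^{pa(i)} and d_i = K_{i,i} − (K_{pa(i),i})ᵀ (K_{pa(i),pa(i)})⁻¹ K_{pa(i),i}; set d₁ = K_{1,1}. Define the Vecchia covariance matrix K̂ ∈ ℝ^{n×n} recursively by K̂_{1,1} = K_{1,1} and, for l = 1, …, n−1: K̂_{l+1,j} = K̂_{j,l+1} = Σ_{p∈pa(l+1)} (b_{l+1})_p K̂_{p,j} for 1 ≤ j ≤ l, and K̂_{l+1,l+1} = Σ_{p,q∈pa(l+1)} (b_{l+1})_p (b_{l+1})_q K̂_{p,q} + d_{l+1}. Then d_i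 > 0 for all i, K̂ is symmetric positive definite, and for every f ∈ ℝⁿ: fᵀ K̂⁻¹ f = f₁²/d₁ + Σ_{i=2}^n (f_i − Σ_{p∈pa(i)} (b_i)_p f_p)² / d_i. -/
open Matrix

noncomputable section

/-- The principal submatrix `K_{S,S}` of `K` indexed by a finite index set `S`. -/
def ksub {n : ℕ} (K : Matrix (Fin n) (Fin n) ℝ) (S : Finset (Fin n)) :
    Matrix {p // p ∈ S} {p // p ∈ S} ℝ :=
  Matrix.of fun p q => K p.1 q.1

/-- The conditional-mean weights `b_i = (K_{S,S})⁻¹ K_{S,i}` for the parent set `S`. -/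
def bW {n : ℕ} (K : Matrix (Fin n) (Fin n) ℝ) (S : Finset (Fin n)) (i : Fin n) :
    {p // p ∈ S} → ℝ :=
  (ksub K S)⁻¹ *ᵥ fun p => K p.1 i

/-- The conditional variance `d_i = K_{i,i} − K_{S,i}ᵀ (K_{S,S})⁻¹ K_{S,i}`. -/
def dCond {n : ℕ} (K : Matrix (Fin n) (Fin n) ℝ) (S : Finset (Fin n)) (i : Fin n) : ℝ :=
  K i i - (fun p : {p // p ∈ S} => K p.1 i) ⬝ᵥ ((ksub K S)⁻¹ *ᵥ fun p => K p.1 i)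

/-- The unit lower triangular matrix whose `i`-th row maps `f` to
`f_i − Σ_{p∈pa(i)} (b_i)_p f_p`. -/
def residualMatrix {n : ℕ} (K : Matrix (Fin n) (Fin n) ℝ) (pa : Fin n → Finset (Fin n)) :
    Matrix (Fin n) (Fin n) ℝ :=
  Matrix.of fun i j =>
    (if i = j then 1 else 0) - if h : j ∈ pa i then bW K (pa i) i ⟨j, h⟩ else 0

lemma residualMatrix_mulVec {n : ℕ} (K : Matrix (Fin n) (Fin n) ℝ)
    (pa : Fin n → Finset (Fin n)) (x : Fin n → ℝ) (i : Fin n) :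
    (residualMatrix K pa *ᵥ x) i = x i - ∑ p : {p // p ∈ pa i}, bW K (pa i) i p * x p.1 := by
  have hsum : ∑ j, (if h : j ∈ pa i then bW K (pa i) i ⟨j, h⟩ else 0) * x j =
      ∑ p : {p // p ∈ pa i}, bW K (pa i) i p * x p.1 := by
    rw [← Finset.sum_subset (Finset.subset_univ (pa i)), ← Finset.sum_coe_sort]
    · exact Finset.sum_congr rfl fun p _ => by simp
    · intro j _ hj
      simp [hj]
  simp only [residualMatrix, mulVec, dotProduct, of_apply, sub_mul, Finset.sum_sub_distrib, hsum]
  simp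

lemma residualMatrix_apply_self {n : ℕ} (K : Matrix (Fin n) (Fin n) ℝ)
    {pa : Fin n → Finset (Fin n)} (hpa : ∀ i, ∀ j ∈ pa i, j < i) (i : Fin n) :
    residualMatrix K pa i i = 1 := by
  have : i ∉ pa i := fun h => lt_irrefl _ (hpa i i h)
  simp [residualMatrix, this]

lemma isUnit_residualMatrix {n : ℕ} (K : Matrix (Fin n) (Fin n) ℝ)
    {pa : Fin n → Finset (Fin n)} (hpa : ∀ i, ∀ j ∈ pa i, j < i) :
    IsUnit (residualMatrix K pa) := by
  rw [Matrix.isUnit_iff_isUnit_det, Matrix.det_of_isLowerTriangular]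
  · simp [residualMatrix_apply_self K hpa]
  · intro i j hij
    replace hij : i < j := hij
    have hj : j ∉ pa i := fun h => lt_asymm hij (hpa i j h)
    simp [residualMatrix, hj, hij.ne]

lemma sum_bW_mul_of_mem {n : ℕ} {K : Matrix (Fin n) (Fin n) ℝ} (hK : K.PosDef)
    {S : Finset (Fin n)} (i : Fin n) {j : Fin n} (hj : j ∈ S) :
    ∑ p : {p // p ∈ S}, bW K S i p * K j p.1 = K j i := by
  have hS : (ksub K S).PosDef := hK.submatrix Subtype.val_injective
  have h : ksub K S *ᵥ bW K S i = fun p => K p.1 i := by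
    rw [bW, mulVec_mulVec, mul_nonsing_inv _ ((isUnit_iff_isUnit_det _).mp hS.isUnit),
      one_mulVec]
  have := congrFun h ⟨j, hj⟩
  simpa [mulVec, dotProduct, ksub, mul_comm] using this

lemma dCond_eq_sub_sum {n : ℕ} {K : Matrix (Fin n) (Fin n) ℝ} (hK : K.IsHermitian)
    (S : Finset (Fin n)) (i : Fin n) :
    dCond K S i = K i i - ∑ p : {p // p ∈ S}, bW K S i p * K i p.1 := by
  have hsym : ∀ p, K p i = K i p := fun p => by simpa using hK.apply i p
  simp [dCond, bW, dotProduct, hsym, mul_comm]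

lemma dCond_pos {n : ℕ} {K : Matrix (Fin n) (Fin n) ℝ} (hK : K.PosDef)
    {pa : Fin n → Finset (Fin n)} (hpa : ∀ i, ∀ j ∈ pa i, j < i) (i : Fin n) :
    0 < dCond K (pa i) i := by
  set v : Fin n → ℝ := residualMatrix K pa i with hv
  have hv0 : v ≠ 0 := fun h => by
    have := residualMatrix_apply_self K hpa i
    rw [← hv, h] at this
    simp at this
  have hKv : ∀ j, (K *ᵥ v) j = K j i - ∑ p : {p // p ∈ pa i}, bW K (pa i) i p * K j p.1 := by
    intro j
    rw [← residualMatrix_mulVec K pa (K j) i]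
    exact dotProduct_comm _ _
  have hquad : v ⬝ᵥ (K *ᵥ v) = dCond K (pa i) i := by
    change (residualMatrix K pa *ᵥ (K *ᵥ v)) i = _
    rw [residualMatrix_mulVec, Finset.sum_eq_zero, sub_zero, hKv, dCond_eq_sub_sum hK.1]
    intro p _
    rw [hKv, sum_bW_mul_of_mem hK i p.2, sub_self, mul_zero]
  have := hK.dotProduct_mulVec_pos hv0
  rwa [star_trivial, hquad] at this

/-- A symmetric matrix obeying the Vecchia recursion is diagonalised by the residual matrix. -/
lemma residualMatrix_mul_mul_transpose {n : ℕ} {K Khat : Matrix (Fin n) (Fin n) ℝ}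
    {pa : Fin n → Finset (Fin n)} (hpa : ∀ i, ∀ j ∈ pa i, j < i)
    (hsym : Khatᵀ = Khat)
    (hlow : ∀ i j, j < i →
      Khat i j = ∑ p : {p // p ∈ pa i}, bW K (pa i) i p * Khat p.1 j)
    (hdiag : ∀ i, Khat i i = (∑ p : {p // p ∈ pa i}, ∑ q : {p // p ∈ pa i},
        bW K (pa i) i p * bW K (pa i) i q * Khat p.1 q.1) + dCond K (pa i) i) :
    residualMatrix K pa * Khat * (residualMatrix K pa)ᵀ =
      diagonal fun i => dCond K (pa i) i := by
  set L := residualMatrix K pa with hL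
  have hLK : ∀ i j, (L * Khat) i j =
      Khat i j - ∑ p : {p // p ∈ pa i}, bW K (pa i) i p * Khat p.1 j := fun i j =>
    residualMatrix_mulVec K pa (fun p => Khat p j) i
  have hLK_lt : ∀ i j, j < i → (L * Khat) i j = 0 := fun i j hij => by
    rw [hLK, ← hlow i j hij, sub_self]
  have hLK_self : ∀ i, (L * Khat) i i = dCond K (pa i) i := by
    intro i
    have hcol : ∀ p : {p // p ∈ pa i}, Khat p.1 i =
        ∑ q : {p // p ∈ pa i}, bW K (pa i) i q * Khat p.1 q.1 := fun p => by
      rw [← hsym, transpose_apply, hlow i p.1 (hpa i p.1 p.2)]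
      simp [transpose_apply]
    rw [hLK, hdiag, sub_eq_iff_eq_add, add_comm]
    congr 1
    refine Finset.sum_congr rfl fun p _ => ?_
    rw [hcol p, Finset.mul_sum]
    exact Finset.sum_congr rfl fun q _ => mul_assoc _ _ _
  have hentry : ∀ i j, j ≤ i → (L * Khat * Lᵀ) i j = (L * Khat) i j := by
    intro i j hij
    have : (L * Khat * Lᵀ) i j = (L *ᵥ (L * Khat) i) j := dotProduct_comm _ _
    rw [this, hL, residualMatrix_mulVec, ← hL, Finset.sum_eq_zero, sub_zero]
    intro p _
    rw [hLK_lt i p.1 ((hpa j p.1 p.2).trans_le hij), mul_zero]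
  have hsymm : (L * Khat * Lᵀ)ᵀ = L * Khat * Lᵀ := by
    simp [transpose_mul, hsym, Matrix.mul_assoc]
  ext i j
  rcases lt_trichotomy i j with h | rfl | h
  · rw [← hsymm, transpose_apply, hentry j i h.le, hLK_lt j i h, diagonal_apply_ne _ h.ne]
  · rw [hentry i i le_rfl, hLK_self, diagonal_apply_eq]
  · rw [hentry i j h.le, hLK_lt i j h, diagonal_apply_ne _ h.ne.symm]

/-- If `L M Lᵀ` is diagonal with `L` invertible, then the quadratic form of `M⁻¹` is a weighted
sum of squares. -/
lemma dotProduct_inv_mulVec_of_mul_mul_transpose_eq_diagonal {n : ℕ}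
    {L M : Matrix (Fin n) (Fin n) ℝ} {d : Fin n → ℝ} (hL : IsUnit L) (hd : ∀ i, d i ≠ 0)
    (h : L * M * Lᵀ = diagonal d) (f : Fin n → ℝ) :
    f ⬝ᵥ (M⁻¹ *ᵥ f) = ∑ i, (L *ᵥ f) i ^ 2 / d i := by
  have hLdet : IsUnit L.det := (isUnit_iff_isUnit_det _).mp hL
  have hdinv : (diagonal d)⁻¹ = diagonal fun i => (d i)⁻¹ := by
    refine inv_eq_right_inv ?_
    simp [diagonal_mul_diagonal, hd]
  have hM : M⁻¹ = Lᵀ * (diagonal fun i => (d i)⁻¹) * L := by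
    rw [← hdinv, ← h, Matrix.mul_inv_rev, Matrix.mul_inv_rev, ← Matrix.mul_assoc,
      mul_nonsing_inv _ (by rwa [det_transpose]), Matrix.one_mul, Matrix.mul_assoc,
      nonsing_inv_mul _ hLdet, Matrix.mul_one]
  rw [hM, ← mulVec_mulVec, ← mulVec_mulVec, dotProduct_mulVec, vecMul_transpose]
  simp only [dotProduct, mulVec_diagonal]
  exact Finset.sum_congr rfl fun i _ => by ring

/-- for a positive definite `K`, parent sets `pa(i) ⊆ {0,…,i−1}` (nonempty
for `i ≠ 0`), and the Vecchia covariance matrix `K̂` defined by the stated recursion, all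
conditional variances are positive, `K̂` is symmetric positive definite, and
`fᵀ K̂⁻¹ f = f₀²/d₀ + Σ_{i≠0} (f_i − Σ_{p∈pa(i)} (b_i)_p f_p)²/d_i` for every `f`. -/
theorem stmt18 (n : ℕ) [NeZero n] (K : Matrix (Fin n) (Fin n) ℝ) (hK : K.PosDef)
    (pa : Fin n → Finset (Fin n))
    (hpane : ∀ i : Fin n, i ≠ 0 → (pa i).Nonempty)
    (hpalt : ∀ i : Fin n, ∀ j ∈ pa i, j < i)
    (Khat : Matrix (Fin n) (Fin n) ℝ)
    (h0 : Khat 0 0 = K 0 0)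
    (hlow : ∀ i : Fin n, i ≠ 0 → ∀ j : Fin n, j < i →
      Khat i j = ∑ p : {p // p ∈ pa i}, bW K (pa i) i p * Khat p.1 j)
    (hsym : ∀ i : Fin n, i ≠ 0 → ∀ j : Fin n, j < i → Khat j i = Khat i j)
    (hdiag : ∀ i : Fin n, i ≠ 0 →
      Khat i i = (∑ p : {p // p ∈ pa i}, ∑ q : {p // p ∈ pa i},
        bW K (pa i) i p * bW K (pa i) i q * Khat p.1 q.1) + dCond K (pa i) i) :
    (0 < K 0 0) ∧
    (∀ i : Fin n, i ≠ 0 → 0 < dCond K (pa i) i) ∧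
    Khat.PosDef ∧
    ∀ f : Fin n → ℝ,
      f ⬝ᵥ (Khat⁻¹ *ᵥ f) =
        f 0 ^ 2 / K 0 0 +
          ∑ i ∈ Finset.univ.erase (0 : Fin n),
            (f i - ∑ p : {p // p ∈ pa i}, bW K (pa i) i p * f p.1) ^ 2 /
              dCond K (pa i) i := by
  have hpa0 : pa 0 = ∅ := Finset.eq_empty_of_forall_notMem fun j hj =>
    (Fin.zero_le j).not_gt (hpalt 0 j hj)
  have : IsEmpty {p // p ∈ pa 0} := Finset.isEmpty_coe_sort.mpr hpa0
  have hd0 : dCond K (pa 0) 0 = K 0 0 := by simp [dCond, dotProduct]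
  have hdpos : ∀ i, 0 < dCond K (pa i) i := dCond_pos hK hpalt
  have hne : ∀ {i j : Fin n}, j < i → i ≠ 0 := fun h => ((Fin.zero_le _).trans_lt h).ne'
  have hKhat : Khatᵀ = Khat := by
    ext i j
    rcases lt_trichotomy i j with h | rfl | h
    · exact (hsym j (hne h) i h).symm
    · rfl
    · exact hsym i (hne h) j h
  have hfac := residualMatrix_mul_mul_transpose hpalt hKhat
    (fun i j h => hlow i (hne h) j h) fun i => by
      rcases eq_or_ne i 0 with rfl | hi
      · simp [h0, hd0]
      · exact hdiag i hi
  have hunit := isUnit_residualMatrix K hpalt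
  refine ⟨hd0 ▸ hdpos 0, fun i _ => hdpos i, ?_, fun f => ?_⟩
  · rw [← hunit.posDef_star_right_conjugate_iff, star_eq_conjTranspose,
      conjTranspose_eq_transpose_of_trivial, hfac, posDef_diagonal_iff]
    exact hdpos
  · rw [dotProduct_inv_mulVec_of_mul_mul_transpose_eq_diagonal hunit
      (fun i => (hdpos i).ne') hfac f, ← Finset.add_sum_erase _ _ (Finset.mem_univ 0)]
    simp [residualMatrix_mulVec, hd0]
end
end
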